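/- Let K be an infinite field, S = K[x_1,...,x_n], and fix an integer j. Let w ∈ Z_{≥0}^n, let M be a finitely generated graded S-module and J ⊆ S a homogeneous ideal. Then for a general λ ∈ K one has dim_K Tor_i^S(M, S/in_w(J))_j ≥ dim_K Tor_i^S(M, S/D_{λ,w}(J))_j for all i ≥ 0. -/

import Mathlib

/-!
Over `K`, the bar complex of `S/I` is a quotient of the bar complex of `S`, so
`dim Tor_i(M, S/I)_j` is a count of dimensions in the strand of degree `j`: it equals a constant,
minus the dimensions of the spaces of chains over `S` that become boundaries over `S/I` in
homological degrees `i` and `i - 1`, minus `dim (M ⊗ S^{⊗ (i - 1)} ⊗ S/I)_j`. The last term is at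
least as large for `D_{λ,w}(J)` as for `in_w(J)`, since monomials that are independent modulo
`in_w(J)` are independent modulo `D_{λ,w}(J)`. After a power of `λ` is cleared, the translates of
an element of `J` form a polynomial curve through its initial form at `λ = 0`. Hence `in_w(J)`,
and with it each space of chains above, consists of values at `0` of polynomial curves that lie in
the corresponding space of `D_{λ,w}(J)` for every `λ ≠ 0`, and lower semicontinuity of rank gives
the inequality for each `i` and general `λ`. One dense open set serves all `i` at once:
`Tor_i(M, S/I)_j` vanishes for large `i`, because the `i`-th syzygies of `M` start at least `i`
degrees above `M`.
-/

open MvPolynomial TensorProduct CategoryTheory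

noncomputable section

/-- The polynomial ring `S = K[x_1,...,x_n]`, standard graded. -/
abbrev PS (K : Type) [Field K] (n : ℕ) : Type := MvPolynomial (Fin n) K

variable (K : Type) [Field K] (n : ℕ)

/-- An ideal of `S` is homogeneous if it contains all homogeneous components of its
elements. -/
def IsHomog (I : Ideal (PS K n)) : Prop :=
  ∀ f ∈ I, ∀ d : ℕ, MvPolynomial.homogeneousComponent d f ∈ I

/-- The change of coordinates of `S` induced by `g ∈ GL_n(K)`, determined by
`g(x_i) = ∑_j g_{ji} x_j`. -/
def coordChange (g : GL (Fin n) K) : PS K n →ₐ[K] PS K n :=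
  MvPolynomial.aeval (fun i => ∑ j, ((g : Matrix (Fin n) (Fin n) K) j i) • MvPolynomial.X j)

/-- A property `P` holds for a general change of coordinates `g ∈ GL_n(K)` if there is a
nonempty Zariski open subset `U ⊆ GL_n(K)` on which it holds; equivalently (as `GL_n(K)` is
an irreducible variety over the infinite field `K`) there is a nonzero polynomial `F` in the
matrix entries such that `P g` holds whenever `F` does not vanish at `g`. -/
def generally (P : GL (Fin n) K → Prop) : Prop :=
  ∃ F : MvPolynomial (Fin n × Fin n) K, F ≠ 0 ∧
    ∀ g : GL (Fin n) K,
      MvPolynomial.eval (fun p => (g : Matrix (Fin n) (Fin n) K) p.1 p.2) F ≠ 0 → P g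

/-- The standard grading of `S = K[x_1,...,x_n]`, extended to `ℤ` (zero in negative
degrees). -/
def polyGrade (d : ℤ) : Submodule K (PS K n) :=
  if 0 ≤ d then homogeneousSubmodule (Fin n) K d.toNat else ⊥

/-- The degree `d` component of the (internal) tensor-product grading on `A ⊗[K] B`. -/
def tensorGrade {A B : Type} [AddCommGroup A] [Module K A] [AddCommGroup B] [Module K B]
    (GA : ℤ → Submodule K A) (GB : ℤ → Submodule K B) (d : ℤ) :
    Submodule K (A ⊗[K] B) :=
  ⨆ p : ℤ, LinearMap.range (TensorProduct.map (GA p).subtype (GB (d - p)).subtype)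

variable (N : Type) [AddCommGroup N] [Module K N] [Module (PS K n) N]
  [IsScalarTower K (PS K n) N]

/-- The tower of `K`-vector spaces `D_i = S^{⊗ i} ⊗_K N` appearing in the bar complex
`M ⊗_K S^{⊗ i} ⊗_K N`, which computes `Tor^S_i(M, N)`. -/
def barD : ℕ → ModuleCat K
  | 0 => ModuleCat.of K N
  | (i + 1) => ModuleCat.of K (PS K n ⊗[K] (barD i))

/-- The internal `ℤ`-grading on `D_i = S^{⊗ i} ⊗_K N` induced by the standard grading of
`S` and a grading `GN` of `N`. -/
def barDGrade (GN : ℤ → Submodule K N) : (i : ℕ) → ℤ → Submodule K (barD K n N i)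
  | 0 => GN
  | (i + 1) => tensorGrade K (polyGrade K n) (barDGrade GN i)

/-- Scalar multiplication `S → N → N` as a `K`-bilinear map. -/
def smulBilin : PS K n →ₗ[K] N →ₗ[K] N :=
  LinearMap.mk₂ K (fun s x => s • x)
    (fun s₁ s₂ x => add_smul s₁ s₂ x)
    (fun c s x => smul_assoc c s x)
    (fun s x y => smul_add s x y)
    (fun c s x => (smul_comm c s x).symm)

/-- The "contraction" part of the bar differential, `c_i : D_{i+1} → D_i`, defined
recursively by `c_0(s ⊗ x) = s • x` and
`c_{i+1}(s ⊗ s' ⊗ t) = (s s') ⊗ t - s ⊗ c_i(s' ⊗ t)`. -/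
def barC : (i : ℕ) → ((barD K n N (i + 1)) →ₗ[K] (barD K n N i))
  | 0 => TensorProduct.lift (smulBilin K n N)
  | (i + 1) =>
      (TensorProduct.map (LinearMap.mul' K (PS K n)) LinearMap.id).comp
        (TensorProduct.assoc K (PS K n) (PS K n) (barD K n N i)).symm.toLinearMap
      - TensorProduct.map LinearMap.id (barC i)

variable (M : Type) [AddCommGroup M] [Module K M] [Module (PS K n) M]
  [IsScalarTower K (PS K n) M]

/-- Right scalar multiplication `M ⊗[K] S → M` as a `K`-linear map. -/
def smulMapM : M ⊗[K] PS K n →ₗ[K] M :=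
  TensorProduct.lift (LinearMap.mk₂ K (fun m s => s • m)
    (fun m₁ m₂ s => smul_add s m₁ m₂)
    (fun c m s => smul_comm s c m)
    (fun m s₁ s₂ => add_smul s₁ s₂ m)
    (fun c m s => smul_assoc c s m))

/-- The bar differential `b_i : M ⊗ D_{i+1} → M ⊗ D_i`,
`b(m ⊗ s ⊗ t) = (s • m) ⊗ t - m ⊗ c_i(s ⊗ t)`.  The complex
`⋯ → M ⊗_K S^{⊗ i} ⊗_K N → ⋯ → M ⊗_K S ⊗_K N → M ⊗_K N → 0`
is the bar complex `M ⊗_S Bar(S, N)`, whose `i`-th homology is `Tor^S_i(M, N)`;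
it is a complex of graded vector spaces with degree-preserving differentials. -/
def barB (i : ℕ) : (M ⊗[K] (barD K n N (i + 1))) →ₗ[K] (M ⊗[K] (barD K n N i)) :=
  (TensorProduct.map (smulMapM K n M) LinearMap.id).comp
      (TensorProduct.assoc K M (PS K n) (barD K n N i)).symm.toLinearMap
  - TensorProduct.map LinearMap.id (barC K n N i)

/-- `dim_K Tor_i^S(M, N)_j`, the dimension of the degree-`j` component of the graded module
`Tor_i^S(M, N)` for graded modules `M`, `N`: it is computed as the homology of the degree-`j`
strand of the bar complex, namely `dim (ker b_i)_j - dim (im b_{i+1})_j`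
(for `i = 0`, `dim (M ⊗_K N)_j - dim (im b_1)_j`). -/
def torStrandDim (GM : ℤ → Submodule K M) (GN : ℤ → Submodule K N) : ℕ → ℤ → ℕ
  | 0, j =>
      Module.finrank K ↥(tensorGrade K GM (barDGrade K n N GN 0) j) -
        Module.finrank K
          ↥(LinearMap.range (barB K n N M 0) ⊓ tensorGrade K GM (barDGrade K n N GN 0) j)
  | (i + 1), j =>
      Module.finrank K
          ↥(LinearMap.ker (barB K n N M i) ⊓
              tensorGrade K GM (barDGrade K n N GN (i + 1)) j) -
        Module.finrank K
          ↥(LinearMap.range (barB K n N M (i + 1)) ⊓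
              tensorGrade K GM (barDGrade K n N GN (i + 1)) j)

/-- The quotient grading on `S/J`. -/
def quotGrade (J : Ideal (PS K n)) : ℤ → Submodule K (PS K n ⧸ J) := fun d =>
  (polyGrade K n d).map (Ideal.Quotient.mkₐ K J).toLinearMap

/-- The grading on an ideal `I ⊆ S` viewed as an `S`-module. -/
def idealGrade (I : Ideal (PS K n)) : ℤ → Submodule K ↥I := fun d =>
  (polyGrade K n d).comap ((Submodule.subtype I).restrictScalars K)

/-- `dim_K Tor_i^S(S/I, S/J)_j`. -/
def torQQ (I J : Ideal (PS K n)) (i : ℕ) (j : ℤ) : ℕ :=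
  torStrandDim K n (PS K n ⧸ J) (PS K n ⧸ I) (quotGrade K n I) (quotGrade K n J) i j

/-- `dim_K Tor_i^S(I, S/J)_j`. -/
def torIQ (I J : Ideal (PS K n)) (i : ℕ) (j : ℤ) : ℕ :=
  torStrandDim K n (PS K n ⧸ J) ↥I (idealGrade K n I) (quotGrade K n J) i j

/-- A property `P` holds for a general (nonzero) scalar `λ ∈ K` if it holds on a nonempty
Zariski open subset of `K`; equivalently, outside the zero set of some nonzero polynomial.
(Since `{0}` is Zariski closed, it is equivalent to quantify over `λ ∈ Kˣ`.) -/
def generallyScalar (P : Kˣ → Prop) : Prop :=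
  ∃ F : Polynomial K, F ≠ 0 ∧ ∀ l : Kˣ, Polynomial.eval (l : K) F ≠ 0 → P l

/-- The diagonal change of coordinates `D_{λ,w} : x_i ↦ λ^{-w_i} x_i`. -/
def diagCoord (w : Fin n → ℕ) (l : Kˣ) : PS K n →ₐ[K] PS K n :=
  MvPolynomial.aeval (fun i => (((l⁻¹ : Kˣ) : K) ^ (w i)) • MvPolynomial.X i)

/-- The `w`-weight of an exponent vector: `∑ w_i m_i`. -/
def wdeg (w : Fin n → ℕ) (m : Fin n →₀ ℕ) : ℕ := ∑ i, w i * m i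

/-- The initial form `in_w(f)`: the sum of the terms of `f` of maximal `w`-weight. -/
def initialForm (w : Fin n → ℕ) (f : PS K n) : PS K n :=
  ∑ m ∈ f.support.filter (fun m => wdeg n w m = f.support.sup (wdeg n w)),
    MvPolynomial.monomial m (MvPolynomial.coeff m f)

/-- The initial ideal `in_w(I)` of `I` with respect to the weight order given by `w`. -/
def initialIdealW (w : Fin n → ℕ) (I : Ideal (PS K n)) : Ideal (PS K n) :=
  Ideal.span {g | ∃ f ∈ I, g = initialForm K n w f}

section Grading

variable {R ι A B : Type*} [CommRing R] [AddCommGroup A] [Module R A] [AddCommGroup B] [Module R B]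

/-- A linear map that is homogeneous of degree `0` with respect to families of submodules
thought of as gradings. -/
def PreservesGrading (GA : ι → Submodule R A) (GB : ι → Submodule R B) (f : A →ₗ[R] B) : Prop :=
  ∀ ⦃d a⦄, a ∈ GA d → f a ∈ GB d

variable [DecidableEq ι] {GA : ι → Submodule R A} {GB : ι → Submodule R B}

/-- The homogeneous components of an element of a graded module, collected in a finitely supported
function; equivalently the coaction `A → A ⊗ R[ι]` that encodes the grading. -/
def gradedCoaction (hA : DirectSum.IsInternal GA) : A →ₗ[R] ι →₀ A :=
  letI := hA.chooseDecomposition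
  DirectSum.toModule R ι (ι →₀ A) (fun d ↦ Finsupp.lsingle d ∘ₗ (GA d).subtype) ∘ₗ
    (DirectSum.decomposeLinearEquiv GA).toLinearMap

theorem gradedCoaction_of_mem (hA : DirectSum.IsInternal GA) {d : ι} {a : A} (ha : a ∈ GA d) :
    gradedCoaction hA a = Finsupp.single d a := by
  let := hA.chooseDecomposition
  simp only [gradedCoaction, LinearMap.comp_apply, LinearEquiv.coe_coe,
    DirectSum.decomposeLinearEquiv_apply, DirectSum.decompose_of_mem GA ha]
  exact DirectSum.toModule_lof R d _

theorem graded_induction (hA : DirectSum.IsInternal GA) {P : A → Prop} (a : A) (zero : P 0)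
    (add : ∀ x y, P x → P y → P (x + y)) (mem : ∀ d, ∀ x ∈ GA d, P x) : P a :=
  Submodule.iSup_induction GA (motive := P) (hA.submodule_iSup_eq_top ▸ Submodule.mem_top) mem
    zero add

theorem isInternal_of_coaction (htop : ⨆ d, GA d = ⊤) (σ : A →ₗ[R] ι →₀ A)
    (hσ : ∀ d, ∀ a ∈ GA d, σ a = Finsupp.single d a) : DirectSum.IsInternal GA := by
  refine DirectSum.isInternal_submodule_of_iSupIndep_of_iSup_eq_top (fun d ↦ ?_) htop
  refine Submodule.disjoint_def.2 fun x hx hx' ↦ ?_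
  have hker : ⨆ p, ⨆ (_ : p ≠ d), GA p ≤ LinearMap.ker (Finsupp.lapply d ∘ₗ σ) :=
    iSup₂_le fun p hp a ha ↦ by simp [hσ p a ha, hp.symm]
  simpa [hσ d x hx] using hker hx'

/-- Projection of a graded module onto its component of degree `d`, as an endomorphism. -/
def gradedProj (hA : DirectSum.IsInternal GA) (d : ι) : A →ₗ[R] A :=
  Finsupp.lapply d ∘ₗ gradedCoaction hA

theorem gradedProj_of_mem (hA : DirectSum.IsInternal GA) {d : ι} {a : A} (ha : a ∈ GA d) :
    gradedProj hA d a = a := by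
  simp [gradedProj, gradedCoaction_of_mem hA ha]

theorem gradedProj_of_mem_ne (hA : DirectSum.IsInternal GA) {p d : ι} (hpd : p ≠ d) {a : A}
    (ha : a ∈ GA p) : gradedProj hA d a = 0 := by
  simp [gradedProj, gradedCoaction_of_mem hA ha, hpd.symm]

theorem gradedProj_mem (hA : DirectSum.IsInternal GA) (d : ι) (a : A) :
    gradedProj hA d a ∈ GA d := by
  induction a using graded_induction hA with
  | zero => simp
  | add x y hx hy => simpa using add_mem hx hy
  | mem p x hx =>
    obtain rfl | hpd := eq_or_ne p d
    · rwa [gradedProj_of_mem hA hx]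
    · simp [gradedProj_of_mem_ne hA hpd hx]

theorem exists_sum_gradedProj (hA : DirectSum.IsInternal GA) (a : A) :
    ∃ s : Finset ι, ∑ d ∈ s, gradedProj hA d a = a := by
  have hsum :
      Finsupp.lsum R (fun _ : ι ↦ (LinearMap.id : A →ₗ[R] A)) (gradedCoaction hA a) = a := by
    induction a using graded_induction hA with
    | zero => simp
    | add x y hx hy => rw [map_add, map_add, hx, hy]
    | mem d x hx => simp [gradedCoaction_of_mem hA hx]
  exact ⟨_, hsum⟩

namespace PreservesGrading

variable {f : A →ₗ[R] B}

theorem map_gradedProj (hf : PreservesGrading GA GB f) (hA : DirectSum.IsInternal GA)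
    (hB : DirectSum.IsInternal GB) (d : ι) (a : A) :
    f (gradedProj hA d a) = gradedProj hB d (f a) := by
  induction a using graded_induction hA with
  | zero => simp
  | add x y hx hy => simp only [map_add, hx, hy]
  | mem p x hx =>
    obtain rfl | hpd := eq_or_ne p d
    · rw [gradedProj_of_mem hA hx, gradedProj_of_mem hB (hf hx)]
    · rw [gradedProj_of_mem_ne hA hpd hx, gradedProj_of_mem_ne hB hpd (hf hx), map_zero]

theorem map_eq_range_inf (hf : PreservesGrading GA GB f) (hA : DirectSum.IsInternal GA)
    (hB : DirectSum.IsInternal GB) (d : ι) : (GA d).map f = LinearMap.range f ⊓ GB d := by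
  refine le_antisymm (le_inf LinearMap.map_le_range (Submodule.map_le_iff_le_comap.2 (@hf d))) ?_
  rintro _ ⟨⟨a, rfl⟩, ha⟩
  exact ⟨gradedProj hA d a, gradedProj_mem hA d a, by
    rw [hf.map_gradedProj hA hB, gradedProj_of_mem hB ha]⟩

theorem mem_of_injective (hf : PreservesGrading GA GB f) (hA : DirectSum.IsInternal GA)
    (hB : DirectSum.IsInternal GB) (hinj : Function.Injective f) {d : ι} {a : A}
    (ha : f a ∈ GB d) : a ∈ GA d := by
  obtain ⟨x, hx, hxa⟩ := (hf.map_eq_range_inf hA hB d).ge ⟨⟨a, rfl⟩, ha⟩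
  rwa [← hinj hxa]

end PreservesGrading

theorem isInternal_map_of_surjective (hA : DirectSum.IsInternal GA) {f : A →ₗ[R] B}
    (hf : Function.Surjective f)
    (hker : ∀ d, ∀ a ∈ LinearMap.ker f, gradedProj hA d a ∈ LinearMap.ker f) :
    DirectSum.IsInternal fun d ↦ (GA d).map f := by
  refine DirectSum.isInternal_submodule_of_iSupIndep_of_iSup_eq_top (fun d ↦ ?_) ?_
  · simp_rw [← Submodule.map_iSup]
    rw [Submodule.disjoint_def]
    rintro _ ⟨a, ha, rfl⟩ ⟨b, hb, hab⟩
    have hprojb : ⨆ p, ⨆ (_ : p ≠ d), GA p ≤ LinearMap.ker (gradedProj hA d) :=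
      iSup₂_le fun p hp x hx ↦ gradedProj_of_mem_ne hA hp hx
    have hba := hker d (b - a) (by simp [hab])
    rwa [map_sub, hprojb hb, gradedProj_of_mem hA ha, zero_sub, neg_mem_iff] at hba
  · rw [← Submodule.map_iSup, hA.submodule_iSup_eq_top, Submodule.map_top,
      LinearMap.range_eq_top.2 hf]

theorem isInternal_comap_of_injective (hB : DirectSum.IsInternal GB) {f : A →ₗ[R] B}
    (hf : Function.Injective f)
    (hrange : ∀ d, ∀ b ∈ LinearMap.range f, gradedProj hB d b ∈ LinearMap.range f) :
    DirectSum.IsInternal fun d ↦ (GB d).comap f := by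
  refine DirectSum.isInternal_submodule_of_iSupIndep_of_iSup_eq_top (fun d ↦ ?_) ?_
  · refine Submodule.disjoint_def.2 fun a ha ha' ↦ hf ?_
    have hle : ⨆ p, ⨆ (_ : p ≠ d), (GB p).comap f ≤ (⨆ p, ⨆ (_ : p ≠ d), GB p).comap f :=
      iSup₂_le fun p hp ↦ Submodule.comap_mono (le_iSup₂_of_le p hp le_rfl)
    rw [map_zero]
    exact Submodule.disjoint_def.1 (hB.submodule_iSupIndep d) _ ha (hle ha')
  · refine eq_top_iff.2 fun a _ ↦ ?_
    obtain ⟨s, hs⟩ := exists_sum_gradedProj hB (f a)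
    choose c hc using fun d ↦ hrange d (f a) ⟨a, rfl⟩
    have hsum : ∑ d ∈ s, c d = a := hf (by simp only [map_sum, hc, hs])
    rw [← hsum]
    exact Submodule.sum_mem _ fun d _ ↦ Submodule.mem_iSup_of_mem d (by
      rw [Submodule.mem_comap, hc]
      exact gradedProj_mem hB d _)

theorem PreservesGrading.isInternal_comap_of_exact {C : Type*} [AddCommGroup C] [Module R C]
    {f : A →ₗ[R] B} (hf : PreservesGrading GA GB f) (hA : DirectSum.IsInternal GA)
    (hB : DirectSum.IsInternal GB) {g : C →ₗ[R] A} (hg : Function.Injective g)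
    (hexact : Function.Exact g f) : DirectSum.IsInternal fun d ↦ (GA d).comap g :=
  isInternal_comap_of_injective hA hg fun d a ha ↦ (hexact _).1 (by
    rw [hf.map_gradedProj hA hB, (hexact a).2 ha, map_zero])

theorem eq_of_le_of_iSup_eq_top (hA : DirectSum.IsInternal GA) {W : ι → Submodule R A}
    (hW : ∀ d, W d ≤ GA d) (htop : ⨆ d, W d = ⊤) : W = GA := by
  have hWint : DirectSum.IsInternal W :=
    DirectSum.isInternal_submodule_of_iSupIndep_of_iSup_eq_top (hA.submodule_iSupIndep.mono hW) htop
  have hid : PreservesGrading W GA LinearMap.id := fun d _ ha ↦ hW d ha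
  exact funext fun d ↦ (hW d).antisymm fun a ha ↦
    hid.mem_of_injective hWint hA Function.injective_id ha

end Grading

section TensorGrading

variable {K : Type} [Field K] {A B C D : Type} [AddCommGroup A] [Module K A] [AddCommGroup B]
  [Module K B] [AddCommGroup C] [Module K C] [AddCommGroup D] [Module K D]
  {GA : ℤ → Submodule K A} {GB : ℤ → Submodule K B} {GC : ℤ → Submodule K C}
  {GD : ℤ → Submodule K D} {a b d : ℤ}

theorem tensorGrade_eq_iSup_map₂ (GA : ℤ → Submodule K A) (GB : ℤ → Submodule K B) (d : ℤ) :
    tensorGrade K GA GB d = ⨆ p, Submodule.map₂ (TensorProduct.mk K A B) (GA p) (GB (d - p)) := by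
  simp only [tensorGrade, TensorProduct.range_map, Submodule.range_subtype]

theorem tmul_mem_tensorGrade {p q : ℤ} {x : A} {y : B} (hx : x ∈ GA p) (hy : y ∈ GB q)
    (hpq : p + q = d) : x ⊗ₜ[K] y ∈ tensorGrade K GA GB d := by
  obtain rfl : q = d - p := by lia
  rw [tensorGrade_eq_iSup_map₂]
  exact Submodule.mem_iSup_of_mem p (Submodule.apply_mem_map₂ _ hx hy)

theorem tensorGrade_le {P : Submodule K (A ⊗[K] B)}
    (h : ∀ p q, p + q = d → ∀ x ∈ GA p, ∀ y ∈ GB q, x ⊗ₜ[K] y ∈ P) :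
    tensorGrade K GA GB d ≤ P := by
  rw [tensorGrade_eq_iSup_map₂]
  exact iSup_le fun p ↦ Submodule.map₂_le.2 fun x hx y hy ↦ h p (d - p) (by lia) x hx y hy

theorem iSup_tensorGrade_eq_top (hA : ⨆ p, GA p = ⊤) (hB : ⨆ q, GB q = ⊤) :
    ⨆ d, tensorGrade K GA GB d = ⊤ := by
  have hle (p q : ℤ) : Submodule.map₂ (TensorProduct.mk K A B) (GA p) (GB q) ≤
      ⨆ d, tensorGrade K GA GB d :=
    Submodule.map₂_le.2 fun x hx y hy ↦
      Submodule.mem_iSup_of_mem (p + q) (tmul_mem_tensorGrade hx hy rfl)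
  rw [eq_top_iff, ← TensorProduct.map₂_mk_top_top_eq_top, ← hA, ← hB, Submodule.map₂_iSup_left]
  simp only [Submodule.map₂_iSup_right, iSup_le_iff]
  exact hle

theorem isInternal_tensorGrade (hA : DirectSum.IsInternal GA) (hB : DirectSum.IsInternal GB) :
    DirectSum.IsInternal (tensorGrade K GA GB) := by
  let σ : A ⊗[K] B →ₗ[K] ℤ →₀ A ⊗[K] B :=
    Finsupp.lmapDomain (A ⊗[K] B) K (fun pq : ℤ × ℤ ↦ pq.1 + pq.2) ∘ₗ
      (finsuppTensorFinsupp K K A B ℤ ℤ).toLinearMap ∘ₗ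
        TensorProduct.map (gradedCoaction hA) (gradedCoaction hB)
  refine isInternal_of_coaction (iSup_tensorGrade_eq_top hA.submodule_iSup_eq_top
    hB.submodule_iSup_eq_top) σ fun d ↦ ?_
  suffices tensorGrade K GA GB d ≤ LinearMap.eqLocus σ (Finsupp.lsingle d) from
    fun x hx ↦ this hx
  refine tensorGrade_le fun p q hpq x hx y hy ↦ ?_
  simp [σ, gradedCoaction_of_mem hA hx, gradedCoaction_of_mem hB hy, finsuppTensorFinsupp_single,
    hpq]

theorem map₂_mk_eq_bot_of_notMem_Icc (hA : ∀ p < a, GA p = ⊥) (hB : ∀ q < b, GB q = ⊥) {p : ℤ}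
    (hp : p ∉ Finset.Icc a (d - b)) :
    Submodule.map₂ (TensorProduct.mk K A B) (GA p) (GB (d - p)) = ⊥ := by
  obtain hp | hp : p < a ∨ d - p < b := by
    rw [Finset.mem_Icc] at hp
    lia
  · rw [hA p hp, Submodule.map₂_bot_left]
  · rw [hB _ hp, Submodule.map₂_bot_right]

theorem tensorGrade_eq_bot (hA : ∀ p < a, GA p = ⊥) (hB : ∀ q < b, GB q = ⊥) (hd : d < a + b) :
    tensorGrade K GA GB d = ⊥ := by
  rw [tensorGrade_eq_iSup_map₂, iSup_eq_bot]
  exact fun p ↦ map₂_mk_eq_bot_of_notMem_Icc hA hB (by rw [Finset.mem_Icc]; lia)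

theorem fg_tensorGrade (hA : ∀ p < a, GA p = ⊥) (hAfg : ∀ p, (GA p).FG) (hB : ∀ q < b, GB q = ⊥)
    (hBfg : ∀ q, (GB q).FG) (d : ℤ) : (tensorGrade K GA GB d).FG := by
  have hfinite : tensorGrade K GA GB d = ⨆ p ∈ Finset.Icc a (d - b),
      Submodule.map₂ (TensorProduct.mk K A B) (GA p) (GB (d - p)) := by
    rw [tensorGrade_eq_iSup_map₂]
    refine le_antisymm (iSup_le fun p ↦ ?_) (iSup₂_le fun p _ ↦ le_iSup_of_le p le_rfl)
    by_cases hp : p ∈ Finset.Icc a (d - b)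
    · exact le_iSup₂_of_le p hp le_rfl
    · exact (map₂_mk_eq_bot_of_notMem_Icc hA hB hp).trans_le bot_le
  rw [hfinite]
  exact Submodule.fg_biSup _ _ fun p _ ↦ (hAfg p).map₂ _ (hBfg _)

theorem PreservesGrading.tensorMap {f : A →ₗ[K] C} {g : B →ₗ[K] D}
    (hf : PreservesGrading GA GC f) (hg : PreservesGrading GB GD g) :
    PreservesGrading (tensorGrade K GA GB) (tensorGrade K GC GD) (TensorProduct.map f g) :=
  fun d ↦ (tensorGrade_le fun _ _ hpq _ hx _ hy ↦
    tmul_mem_tensorGrade (hf hx) (hg hy) hpq :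
    tensorGrade K GA GB d ≤ (tensorGrade K GC GD d).comap (TensorProduct.map f g))

end TensorGrading

section PolynomialGrading

variable {K : Type} [Field K] {n : ℕ}

theorem polyGrade_natCast (d : ℕ) : polyGrade K n d = homogeneousSubmodule (Fin n) K d := by
  simp [polyGrade]

theorem polyGrade_eq_bot {d : ℤ} (hd : d < 0) : polyGrade K n d = ⊥ := by
  simp [polyGrade, hd]

theorem fg_polyGrade (d : ℤ) : (polyGrade K n d).FG := by
  obtain hd | hd := lt_or_ge d 0
  · simp only [polyGrade_eq_bot hd, Submodule.fg_bot]
  · obtain ⟨e, rfl⟩ := Int.eq_ofNat_of_zero_le hd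
    rw [polyGrade_natCast]
    exact homogeneousSubmodule_fg ..

theorem eq_zero_or_isHomogeneous_of_mem_polyGrade {d : ℤ} {f : PS K n} (hf : f ∈ polyGrade K n d) :
    f = 0 ∨ ∃ e : ℕ, d = e ∧ f.IsHomogeneous e := by
  obtain hd | hd := lt_or_ge d 0
  · exact Or.inl (by simpa [polyGrade_eq_bot hd] using hf)
  · obtain ⟨e, rfl⟩ := Int.eq_ofNat_of_zero_le hd
    rw [polyGrade_natCast] at hf
    exact Or.inr ⟨e, rfl, hf⟩

theorem one_mem_polyGrade : (1 : PS K n) ∈ polyGrade K n 0 :=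
  (polyGrade_natCast (K := K) (n := n) 0).ge (isHomogeneous_one (Fin n) K)

theorem isInternal_polyGrade : DirectSum.IsInternal (polyGrade K n) := by
  have hnat : DirectSum.IsInternal (homogeneousSubmodule (Fin n) K) :=
    have := MvPolynomial.gradedAlgebra (σ := Fin n) (R := K)
    DirectSum.Decomposition.isInternal _
  refine isInternal_of_coaction ?_ (Finsupp.lmapDomain _ K Nat.cast ∘ₗ gradedCoaction hnat)
    fun d f hf ↦ ?_
  · rw [eq_top_iff, ← hnat.submodule_iSup_eq_top]
    exact iSup_le fun d ↦ le_iSup_of_le (d : ℤ) (polyGrade_natCast d).ge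
  · obtain rfl | ⟨e, rfl, he⟩ := eq_zero_or_isHomogeneous_of_mem_polyGrade hf
    · simp
    · simp [gradedCoaction_of_mem hnat he]

theorem gradedProj_polyGrade (d : ℤ) (f : PS K n) : gradedProj isInternal_polyGrade d f =
    if 0 ≤ d then homogeneousComponent d.toNat f else 0 := by
  induction f using graded_induction (isInternal_polyGrade (K := K) (n := n)) with
  | zero => simp
  | add f g hf hg => rw [map_add, hf, hg]; split_ifs <;> simp
  | mem p f hf =>
    obtain rfl | ⟨e, rfl, he⟩ := eq_zero_or_isHomogeneous_of_mem_polyGrade hf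
    · simp
    obtain rfl | hne := eq_or_ne (e : ℤ) d
    · simp [gradedProj_of_mem _ hf, homogeneousComponent_of_mem he]
    · rw [gradedProj_of_mem_ne _ hne hf, homogeneousComponent_of_mem he]
      split_ifs <;> first | rfl | lia

theorem gradedProj_polyGrade_mem {I : Ideal (PS K n)} (hI : IsHomog K n I) (d : ℤ) {f : PS K n}
    (hf : f ∈ I) : gradedProj isInternal_polyGrade d f ∈ I := by
  rw [gradedProj_polyGrade]
  split_ifs
  · exact hI f hf _
  · exact I.zero_mem

theorem gradedProj_polyGrade_mem_restrictSupport {B : Set (Fin n →₀ ℕ)} (d : ℤ) {f : PS K n}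
    (hf : f ∈ restrictSupport K B) :
    gradedProj isInternal_polyGrade d f ∈ restrictSupport K B := by
  rw [gradedProj_polyGrade]
  split_ifs
  · refine (mem_restrictSupport_iff K).2 fun m hm ↦ (mem_restrictSupport_iff K).1 hf ?_
    simp only [Finset.mem_coe, mem_support_iff, coeff_homogeneousComponent] at hm ⊢
    exact fun h ↦ hm (by rw [h, ite_self])
  · exact zero_mem _

theorem isInternal_quotGrade {I : Ideal (PS K n)} (hI : IsHomog K n I) :
    DirectSum.IsInternal (quotGrade K n I) :=
  isInternal_map_of_surjective isInternal_polyGrade (Ideal.Quotient.mkₐ_surjective K I)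
    fun d _ hf ↦ Ideal.Quotient.eq_zero_iff_mem.2
      (gradedProj_polyGrade_mem hI d (Ideal.Quotient.eq_zero_iff_mem.1 hf))

theorem quotGrade_eq_bot (I : Ideal (PS K n)) {d : ℤ} (hd : d < 0) : quotGrade K n I d = ⊥ := by
  rw [quotGrade, polyGrade_eq_bot hd, Submodule.map_bot]

theorem fg_quotGrade (I : Ideal (PS K n)) (d : ℤ) : (quotGrade K n I d).FG :=
  (fg_polyGrade d).map _

theorem gradedSMul_of_forall_natCast {M : Type} [AddCommGroup M] [Module K M] [Module (PS K n) M]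
    {GM : ℤ → Submodule K M}
    (h : ∀ (a : ℕ) (b : ℤ) (s : PS K n) (x : M),
      s ∈ homogeneousSubmodule (Fin n) K a → x ∈ GM b → s • x ∈ GM (a + b)) :
    SetLike.GradedSMul (polyGrade K n) GM where
  smul_mem a b s x hs hx := by
    obtain rfl | ⟨e, rfl, he⟩ := eq_zero_or_isHomogeneous_of_mem_polyGrade hs
    · simp
    · exact h e b s x he hx

instance : SetLike.GradedSMul (polyGrade K n) (polyGrade K n) :=
  gradedSMul_of_forall_natCast fun a b f g hf hg ↦ by
    obtain rfl | ⟨e, rfl, he⟩ := eq_zero_or_isHomogeneous_of_mem_polyGrade hg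
    · simp
    · rw [← Nat.cast_add, polyGrade_natCast]
      exact IsHomogeneous.mul hf he

instance (I : Ideal (PS K n)) : SetLike.GradedSMul (polyGrade K n) (quotGrade K n I) where
  smul_mem _ _ s _ hs := by
    rintro ⟨f, hf, rfl⟩
    exact ⟨s * f, SetLike.GradedSMul.smul_mem hs hf, map_mul (Ideal.Quotient.mk I) s f⟩

end PolynomialGrading

section FiniteGradedModule

variable {K : Type} [Field K] {n : ℕ} {M : Type} [AddCommGroup M] [Module K M] [Module (PS K n) M]
  {GM : ℤ → Submodule K M}

theorem exists_finset_homogeneous_span_eq_top [Module.Finite (PS K n) M]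
    (hM : DirectSum.IsInternal GM) :
    ∃ T : Finset M, (∀ t ∈ T, ∃ d, t ∈ GM d) ∧ Submodule.span (PS K n) (T : Set M) = ⊤ := by
  have htop : Submodule.span (PS K n) {x | ∃ d, x ∈ GM d} = ⊤ := by
    rw [eq_top_iff]
    rintro x -
    induction x using graded_induction hM with
    | zero => exact zero_mem _
    | add x y hx hy => exact add_mem hx hy
    | mem d x hx => exact Submodule.subset_span ⟨d, hx⟩
  obtain ⟨T, hT, hspan⟩ := Submodule.fg_span_iff_fg_span_finset_subset _ |>.1
    (htop ▸ Module.Finite.fg_top)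
  exact ⟨T, fun t ht ↦ hT ht, hspan.symm.trans htop⟩

variable [IsScalarTower K (PS K n) M]

theorem grade_eq_iSup_polyGrade_smul [SetLike.GradedSMul (polyGrade K n) GM]
    (hM : DirectSum.IsInternal GM) {T : Finset M} {deg : M → ℤ} (hdeg : ∀ t ∈ T, t ∈ GM (deg t))
    (hspan : Submodule.span (PS K n) (T : Set M) = ⊤) (d : ℤ) :
    GM d = ⨆ t ∈ T, (polyGrade K n (d - deg t)).map ((smulBilin K n M).flip t) := by
  refine congrFun (eq_of_le_of_iSup_eq_top hM (W := fun d ↦ ⨆ t ∈ T, (polyGrade K n (d - deg t)).map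
    ((smulBilin K n M).flip t)) (fun d ↦ ?_) ?_).symm d
  · refine iSup₂_le fun t ht ↦ ?_
    rintro _ ⟨s, hs, rfl⟩
    have hst : s • t ∈ GM (d - deg t + deg t) := SetLike.GradedSMul.smul_mem hs (hdeg t ht)
    rwa [sub_add_cancel] at hst
  · rw [eq_top_iff]
    rintro x -
    induction hspan.ge (Submodule.mem_top (x := x)) using Submodule.closure_induction with
    | zero => exact zero_mem _
    | add x y _ _ hx hy => exact add_mem hx hy
    | smul_mem s t ht =>
      induction s using graded_induction (isInternal_polyGrade (K := K) (n := n)) with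
      | zero => simp
      | add f g hf hg => exact add_smul f g t ▸ add_mem hf hg
      | mem p s hs =>
        refine Submodule.mem_iSup_of_mem (p + deg t) (Submodule.mem_iSup_of_mem t
          (Submodule.mem_iSup_of_mem ht ⟨s, ?_, rfl⟩))
        rwa [add_sub_cancel_right]

theorem exists_grade_eq_bot_and_fg [Module.Finite (PS K n) M]
    [SetLike.GradedSMul (polyGrade K n) GM] (hM : DirectSum.IsInternal GM) :
    ∃ a : ℤ, (∀ d < a, GM d = ⊥) ∧ ∀ d, (GM d).FG := by
  obtain ⟨T, hT, hspan⟩ := exists_finset_homogeneous_span_eq_top (n := n) hM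
  choose! deg hdeg using hT
  obtain ⟨a, ha⟩ := (T.image deg).bddBelow
  refine ⟨a, fun d hd ↦ ?_, fun d ↦ ?_⟩
  · rw [grade_eq_iSup_polyGrade_smul hM hdeg hspan, iSup₂_eq_bot]
    intro t ht
    have hat : a ≤ deg t := ha (by simpa using ⟨t, ht, rfl⟩)
    rw [polyGrade_eq_bot (by lia), Submodule.map_bot]
  · rw [grade_eq_iSup_polyGrade_smul hM hdeg hspan]
    exact Submodule.fg_biSup _ _ fun t _ ↦ (fg_polyGrade _).map _

end FiniteGradedModule

section BarComplex

variable {K : Type} [Field K] {n : ℕ} {N M M' C : Type} [AddCommGroup N] [Module K N]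
  [AddCommGroup M] [Module K M] [AddCommGroup M'] [Module K M'] [AddCommGroup C] [Module K C]
  {GN : ℤ → Submodule K N} {GM : ℤ → Submodule K M} {i : ℕ}

/-- The pure tensor `s ⊗ t` in `D_{i+1} = S ⊗ D_i`; naming it keeps the two presentations of
`D_{i+1}`, which only agree after unfolding, apart. -/
def barTensor (i : ℕ) : PS K n →ₗ[K] barD K n N i →ₗ[K] barD K n N (i + 1) :=
  TensorProduct.mk K (PS K n) (barD K n N i)

theorem barD_hom_ext {f g : barD K n N (i + 1) →ₗ[K] C}
    (h : ∀ s t, f (barTensor i s t) = g (barTensor i s t)) : f = g :=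
  TensorProduct.ext' (M := PS K n) (N := barD K n N i) h

theorem tensor_barD_hom_ext {f g : M ⊗[K] barD K n N (i + 1) →ₗ[K] C}
    (h : ∀ m s t, f (m ⊗ₜ barTensor i s t) = g (m ⊗ₜ barTensor i s t)) : f = g :=
  TensorProduct.ext <| LinearMap.ext fun m ↦ barD_hom_ext (h m)

theorem tensor_barD_hom_ext₂ {f g : M ⊗[K] barD K n N (i + 2) →ₗ[K] C}
    (h : ∀ m s s' t, f (m ⊗ₜ barTensor (i + 1) s (barTensor i s' t)) =
      g (m ⊗ₜ barTensor (i + 1) s (barTensor i s' t))) : f = g :=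
  tensor_barD_hom_ext fun m s t ↦ LinearMap.congr_fun (barD_hom_ext (h m s) :
    f ∘ₗ TensorProduct.mk K M _ m ∘ₗ barTensor (i + 1) s =
      g ∘ₗ TensorProduct.mk K M _ m ∘ₗ barTensor (i + 1) s) t

theorem barDGrade_succ_le {d : ℤ} {P : Submodule K (barD K n N (i + 1))}
    (h : ∀ q r, q + r = d → ∀ s ∈ polyGrade K n q, ∀ t ∈ barDGrade K n N GN i r,
      barTensor i s t ∈ P) : barDGrade K n N GN (i + 1) d ≤ P :=
  tensorGrade_le (A := PS K n) (B := barD K n N i) h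

theorem barTensor_mem_barDGrade {q r d : ℤ} {s : PS K n} {t : barD K n N i}
    (hs : s ∈ polyGrade K n q) (ht : t ∈ barDGrade K n N GN i r) (hqr : q + r = d) :
    barTensor i s t ∈ barDGrade K n N GN (i + 1) d :=
  tmul_mem_tensorGrade hs ht hqr

/-- The grading on the `i`-th term `M ⊗ D_i` of the bar complex. -/
abbrev barGrade (GM : ℤ → Submodule K M) (GN : ℤ → Submodule K N) (i : ℕ) :
    ℤ → Submodule K (M ⊗[K] barD K n N i) :=
  tensorGrade K GM (barDGrade K n N GN i)

theorem barGrade_succ_le {d : ℤ} {P : Submodule K (M ⊗[K] barD K n N (i + 1))}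
    (h : ∀ p q r, p + q + r = d → ∀ m ∈ GM p, ∀ s ∈ polyGrade K n q,
      ∀ t ∈ barDGrade K n N GN i r, m ⊗ₜ barTensor i s t ∈ P) :
    barGrade GM GN (i + 1) d ≤ P :=
  tensorGrade_le fun p e hpe m hm ↦ barDGrade_succ_le
    (P := P.comap (TensorProduct.mk K M _ m)) fun q r hqr s hs t ht ↦
      h p q r (by lia) m hm s hs t ht

theorem isInternal_barDGrade (hN : DirectSum.IsInternal GN) :
    ∀ i, DirectSum.IsInternal (barDGrade K n N GN i)
  | 0 => hN
  | i + 1 => isInternal_tensorGrade isInternal_polyGrade (isInternal_barDGrade hN i)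

theorem isInternal_barGrade (hM : DirectSum.IsInternal GM) (hN : DirectSum.IsInternal GN) (i : ℕ) :
    DirectSum.IsInternal (barGrade (n := n) GM GN i) :=
  isInternal_tensorGrade hM (isInternal_barDGrade hN i)

theorem barDGrade_eq_bot (hN : ∀ d < 0, GN d = ⊥) : ∀ i, ∀ d < 0, barDGrade K n N GN i d = ⊥
  | 0 => hN
  | i + 1 => fun _ hd ↦ tensorGrade_eq_bot (fun _ ↦ polyGrade_eq_bot) (barDGrade_eq_bot hN i) hd

theorem fg_barDGrade (hN : ∀ d < 0, GN d = ⊥) (hNfg : ∀ d, (GN d).FG) :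
    ∀ i d, (barDGrade K n N GN i d).FG
  | 0 => hNfg
  | i + 1 => fg_tensorGrade (fun _ ↦ polyGrade_eq_bot) fg_polyGrade (barDGrade_eq_bot hN i)
      (fg_barDGrade hN hNfg i)

theorem finite_barGrade {a : ℤ} (ha : ∀ d < a, GM d = ⊥) (hMfg : ∀ d, (GM d).FG)
    (hN : ∀ d < 0, GN d = ⊥) (hNfg : ∀ d, (GN d).FG) (i : ℕ) (d : ℤ) :
    Module.Finite K (barGrade (n := n) GM GN i d) :=
  Module.Finite.iff_fg.2 <|
    fg_tensorGrade ha hMfg (barDGrade_eq_bot hN i) (fg_barDGrade hN hNfg i) d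

variable [Module (PS K n) N] [IsScalarTower K (PS K n) N]
  [Module (PS K n) M] [IsScalarTower K (PS K n) M]
  [Module (PS K n) M'] [IsScalarTower K (PS K n) M']

theorem barB_tmul_barTensor (m : M) (s : PS K n) (t : barD K n N i) :
    barB K n N M i (m ⊗ₜ barTensor i s t) =
      (s • m) ⊗ₜ t - m ⊗ₜ barC K n N i (barTensor i s t) := rfl

theorem barC_succ_barTensor (s s' : PS K n) (t : barD K n N i) :
    barC K n N (i + 1) (barTensor (i + 1) s (barTensor i s' t)) =
      barTensor i (s * s') t - barTensor i s (barC K n N i (barTensor i s' t)) := rfl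

/-- This lets every property of `c_i` be deduced from the same property of `b_{i-1}`. -/
theorem barC_succ (i : ℕ) : barC K n N (i + 1) = barB K n N (PS K n) i := by
  have hmul : smulMapM K n (PS K n) = LinearMap.mul' K (PS K n) :=
    TensorProduct.ext' fun s s' ↦ mul_comm s' s
  rw [barB, hmul]
  rfl

theorem barB_comp_barB_of_barC (h : barC K n N i ∘ₗ barC K n N (i + 1) = 0) :
    barB K n N M i ∘ₗ barB K n N M (i + 1) = 0 := by
  refine tensor_barD_hom_ext₂ fun m s s' t ↦ ?_
  have hC := LinearMap.congr_fun h (barTensor (i + 1) s (barTensor i s' t))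
  rw [LinearMap.comp_apply, barC_succ_barTensor, map_sub, LinearMap.zero_apply, sub_eq_zero] at hC
  simp only [LinearMap.comp_apply, barB_tmul_barTensor, barC_succ_barTensor, map_sub, tmul_sub, hC,
    smul_smul, mul_comm s', LinearMap.zero_apply]
  abel

theorem barC_comp_barC (i : ℕ) : barC K n N i ∘ₗ barC K n N (i + 1) = 0 := by
  induction i with
  | zero =>
    refine tensor_barD_hom_ext (M := PS K n) fun s s' x ↦
      (?_ : barC K n N 0 (barC K n N 1 (barTensor 1 s (barTensor 0 s' x))) = 0)
    rw [barC_succ_barTensor, map_sub]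
    exact sub_eq_zero.2 (mul_smul (β := N) s s' x)
  | succ i ih => rw [barC_succ, barC_succ (i + 1)]; exact barB_comp_barB_of_barC ih

theorem barB_barB (i : ℕ) (x : M ⊗[K] barD K n N (i + 2)) :
    barB K n N M i (barB K n N M (i + 1) x) = 0 :=
  LinearMap.congr_fun (barB_comp_barB_of_barC (barC_comp_barC i)) x

theorem PreservesGrading.barB_of_barC [SetLike.GradedSMul (polyGrade K n) GM]
    (h : PreservesGrading (barDGrade K n N GN (i + 1)) (barDGrade K n N GN i) (barC K n N i)) :
    PreservesGrading (barGrade GM GN (i + 1)) (barGrade GM GN i) (barB K n N M i) := fun d ↦ by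
  refine barGrade_succ_le (P := (barGrade GM GN i d).comap (barB K n N M i))
    fun p q r hpqr m hm s hs t ht ↦ ?_
  rw [Submodule.mem_comap, barB_tmul_barTensor]
  exact sub_mem
    (tmul_mem_tensorGrade (SetLike.GradedSMul.smul_mem hs hm) ht (by rw [vadd_eq_add]; lia))
    (tmul_mem_tensorGrade hm (h (barTensor_mem_barDGrade hs ht rfl)) (by lia))

theorem preservesGrading_barC [SetLike.GradedSMul (polyGrade K n) GN] (i : ℕ) :
    PreservesGrading (barDGrade K n N GN (i + 1)) (barDGrade K n N GN i) (barC K n N i) := by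
  induction i with
  | zero =>
    refine fun d ↦ barDGrade_succ_le (P := (GN d).comap (barC K n N 0)) fun q r hqr s hs x hx ↦ ?_
    exact hqr ▸ SetLike.GradedSMul.smul_mem (A := polyGrade K n) (B := GN) hs hx
  | succ i ih => exact barC_succ (K := K) (n := n) (N := N) i ▸ ih.barB_of_barC

theorem preservesGrading_barB [SetLike.GradedSMul (polyGrade K n) GM]
    [SetLike.GradedSMul (polyGrade K n) GN] (i : ℕ) :
    PreservesGrading (barGrade GM GN (i + 1)) (barGrade GM GN i) (barB K n N M i) :=
  (preservesGrading_barC i).barB_of_barC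

theorem barB_rTensor (f : M →ₗ[PS K n] M') (i : ℕ) (x : M ⊗[K] barD K n N (i + 1)) :
    barB K n N M' i ((f.restrictScalars K).rTensor _ x) =
      (f.restrictScalars K).rTensor _ (barB K n N M i x) := by
  refine LinearMap.congr_fun (tensor_barD_hom_ext fun m s t ↦ ?_ :
    barB K n N M' i ∘ₗ (f.restrictScalars K).rTensor _ =
      (f.restrictScalars K).rTensor _ ∘ₗ barB K n N M i) x
  simp only [LinearMap.comp_apply, LinearMap.rTensor_tmul, barB_tmul_barTensor, map_sub,
    LinearMap.restrictScalars_apply, map_smul]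

end BarComplex

section BarFunctoriality

variable {K : Type} [Field K] {n : ℕ} {N N' : Type} [AddCommGroup N] [Module K N]
  [AddCommGroup N'] [Module K N'] {GN : ℤ → Submodule K N} {GN' : ℤ → Submodule K N'}

/-- The map `D_i(N) → D_i(N')` induced by `φ : N → N'`; it is `K`-linear even when `φ` is not
`S`-linear. -/
def barDMap (φ : N →ₗ[K] N') : (i : ℕ) → barD K n N i →ₗ[K] barD K n N' i
  | 0 => φ
  | i + 1 => (barDMap φ i).lTensor (PS K n)

theorem barDMap_barTensor (φ : N →ₗ[K] N') (i : ℕ) (s : PS K n) (t : barD K n N i) :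
    barDMap φ (i + 1) (barTensor i s t) = barTensor i s (barDMap φ i t) := rfl

theorem barDMap_surjective {φ : N →ₗ[K] N'} (hφ : Function.Surjective φ) :
    ∀ i, Function.Surjective (barDMap (n := n) φ i)
  | 0 => hφ
  | i + 1 => LinearMap.lTensor_surjective _ (barDMap_surjective hφ i)

theorem barDMap_injective {φ : N →ₗ[K] N'} (hφ : Function.Injective φ) :
    ∀ i, Function.Injective (barDMap (n := n) φ i)
  | 0 => hφ
  | i + 1 => Module.Flat.lTensor_preserves_injective_linearMap _ (barDMap_injective hφ i)

theorem PreservesGrading.barDMap {φ : N →ₗ[K] N'} (hφ : PreservesGrading GN GN' φ) :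
    ∀ i, PreservesGrading (barDGrade K n N GN i) (barDGrade K n N' GN' i) (barDMap φ i)
  | 0 => hφ
  | i + 1 => PreservesGrading.tensorMap (f := LinearMap.id) (fun _ _ hs ↦ hs) (hφ.barDMap i)

variable {M : Type} [AddCommGroup M] [Module K M] {GM : ℤ → Submodule K M}

/-- The map `M ⊗ D_i(N) → M ⊗ D_i(N')` between terms of the bar complexes induced by
`φ : N → N'`. -/
abbrev barMap (M : Type) [AddCommGroup M] [Module K M] (φ : N →ₗ[K] N') (i : ℕ) :
    M ⊗[K] barD K n N i →ₗ[K] M ⊗[K] barD K n N' i :=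
  (barDMap φ i).lTensor M

theorem PreservesGrading.barMap {φ : N →ₗ[K] N'} (hφ : PreservesGrading GN GN' φ) (i : ℕ) :
    PreservesGrading (barGrade (n := n) GM GN i) (barGrade GM GN' i) (barMap M φ i) :=
  PreservesGrading.tensorMap (f := LinearMap.id) (fun _ _ hm ↦ hm) (hφ.barDMap i)

variable [Module (PS K n) N] [IsScalarTower K (PS K n) N] [Module (PS K n) N']
  [IsScalarTower K (PS K n) N'] [Module (PS K n) M] [IsScalarTower K (PS K n) M]

theorem barB_comp_barMap_of_barC {φ : N →ₗ[K] N'} {i : ℕ}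
    (h : barC K n N' i ∘ₗ barDMap φ (i + 1) = barDMap φ i ∘ₗ barC K n N i) :
    barB K n N' M i ∘ₗ barMap M φ (i + 1) = barMap M φ i ∘ₗ barB K n N M i := by
  refine tensor_barD_hom_ext fun m s t ↦ ?_
  have hC : barC K n N' i (barTensor i s (barDMap φ i t)) =
      barDMap φ i (barC K n N i (barTensor i s t)) := LinearMap.congr_fun h (barTensor i s t)
  simp only [LinearMap.comp_apply, LinearMap.lTensor_tmul, barDMap_barTensor, barB_tmul_barTensor,
    map_sub, hC]

theorem barC_comp_barDMap (φ : N →ₗ[PS K n] N') (i : ℕ) :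
    barC K n N' i ∘ₗ barDMap (φ.restrictScalars K) (i + 1) =
      barDMap (φ.restrictScalars K) i ∘ₗ barC K n N i := by
  induction i with
  | zero => exact barD_hom_ext fun s x ↦ (φ.map_smul s x).symm
  | succ i ih => rw [barC_succ, barC_succ]; exact barB_comp_barMap_of_barC ih

theorem barB_barMap (φ : N →ₗ[PS K n] N') (i : ℕ) (x : M ⊗[K] barD K n N (i + 1)) :
    barB K n N' M i (barMap M (φ.restrictScalars K) (i + 1) x) =
      barMap M (φ.restrictScalars K) i (barB K n N M i x) :=
  LinearMap.congr_fun (barB_comp_barMap_of_barC (barC_comp_barDMap φ i)) x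

end BarFunctoriality

section BaseChange

variable {K : Type} [Field K] {n : ℕ} {N V F : Type} [AddCommGroup N] [Module K N]
  [AddCommGroup V] [Module K V] [AddCommGroup F] [Module K F] [Module (PS K n) F]
  [IsScalarTower K (PS K n) F] {η : V →ₗ[K] F}

variable (N) in
/-- The homotopy `sv ⊗ t ↦ v ⊗ (s ⊗ t)` contracting the bar complex of a free module
`F = S ⊗ V` in positive degrees. -/
def baseChangeHomotopy (hη : IsBaseChange (PS K n) η) (i : ℕ) :
    F ⊗[K] barD K n N i →ₗ[K] F ⊗[K] barD K n N (i + 1) :=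
  η.rTensor _ ∘ₗ (TensorProduct.leftComm K (PS K n) V (barD K n N i)).toLinearMap ∘ₗ
    (TensorProduct.assoc K (PS K n) V (barD K n N i)).toLinearMap ∘ₗ
      (hη.equiv.symm.toLinearMap.restrictScalars K).rTensor _

theorem baseChangeHomotopy_smul_tmul (hη : IsBaseChange (PS K n) η) (i : ℕ) (s : PS K n) (v : V)
    (t : barD K n N i) : baseChangeHomotopy N hη i ((s • η v) ⊗ₜ t) = η v ⊗ₜ barTensor i s t := by
  have hsv : hη.equiv.symm (s • η v) = s ⊗ₜ v := by
    rw [LinearEquiv.symm_apply_eq, hη.equiv_tmul]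
  exact congrArg (fun x ↦ η.rTensor _ (TensorProduct.leftComm K (PS K n) V (barD K n N i)
    (TensorProduct.assoc K (PS K n) V (barD K n N i) (x ⊗ₜ t)))) hsv

variable [Module (PS K n) N] [IsScalarTower K (PS K n) N]

theorem barB_baseChangeHomotopy_add (hη : IsBaseChange (PS K n) η) (i : ℕ)
    (x : F ⊗[K] barD K n N (i + 1)) :
    barB K n N F (i + 1) (baseChangeHomotopy N hη (i + 1) x) +
      baseChangeHomotopy N hη i (barB K n N F i x) = x := by
  refine LinearMap.congr_fun (tensor_barD_hom_ext fun y s' t ↦ ?_ :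
    barB K n N F (i + 1) ∘ₗ baseChangeHomotopy N hη (i + 1) +
      baseChangeHomotopy N hη i ∘ₗ barB K n N F i = LinearMap.id) x
  obtain ⟨y, rfl⟩ := hη.equiv.surjective y
  induction y with
  | zero => simp only [map_zero, zero_tmul]
  | add y z hy hz => simp only [map_add, add_tmul, hy, hz]
  | tmul s v =>
    simp only [hη.equiv_tmul, LinearMap.add_apply, LinearMap.comp_apply, barB_tmul_barTensor,
      baseChangeHomotopy_smul_tmul, barC_succ_barTensor, tmul_sub, map_sub, smul_smul,
      mul_comm s', LinearMap.id_apply]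
    abel

end BaseChange

section ConnectingMap

variable {K : Type} [Field K] {n : ℕ} {N A F M : Type} [AddCommGroup N] [Module K N]
  [Module (PS K n) N] [IsScalarTower K (PS K n) N] [AddCommGroup A] [Module K A]
  [Module (PS K n) A] [IsScalarTower K (PS K n) A] [AddCommGroup F] [Module K F]
  [Module (PS K n) F] [IsScalarTower K (PS K n) F] [AddCommGroup M] [Module K M]
  [Module (PS K n) M] [IsScalarTower K (PS K n) M] {GN : ℤ → Submodule K N}
  {GA : ℤ → Submodule K A} {GF : ℤ → Submodule K F}

theorem rTensor_mem_range_barB_of_exact [SetLike.GradedSMul (polyGrade K n) GF]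
    [SetLike.GradedSMul (polyGrade K n) GN] (hA : DirectSum.IsInternal GA)
    (hF : DirectSum.IsInternal GF) (hN : DirectSum.IsInternal GN) {ι : A →ₗ[PS K n] F}
    {μ : F →ₗ[PS K n] M} (hι : Function.Injective ι) (hιμ : Function.Exact ι μ)
    (hμ : Function.Surjective μ) (hιgr : PreservesGrading GA GF (ι.restrictScalars K))
    {i : ℕ} {d : ℤ}
    (hacyclic : ∀ x, barB K n N F i x = 0 → x ∈ LinearMap.range (barB K n N F (i + 1)))
    (hconnecting : ∀ y ∈ barGrade GA GN i d,
      (ι.restrictScalars K).rTensor _ y ∈ LinearMap.range (barB K n N F i) →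
        y ∈ LinearMap.range (barB K n N A i))
    {w : F ⊗[K] barD K n N (i + 1)} (hw : w ∈ barGrade GF GN (i + 1) d)
    (hbw : barB K n N M i ((μ.restrictScalars K).rTensor _ w) = 0) :
    (μ.restrictScalars K).rTensor _ w ∈ LinearMap.range (barB K n N M (i + 1)) := by
  have hexact (k : ℕ) : Function.Exact ((ι.restrictScalars K).rTensor (barD K n N k))
      ((μ.restrictScalars K).rTensor (barD K n N k)) := rTensor_exact _ hιμ hμ
  obtain ⟨y, hy⟩ := (hexact i _).1 ((barB_rTensor μ i w).symm.trans hbw)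
  have hyd : y ∈ barGrade GA GN i d := by
    refine (hιgr.tensorMap (g := LinearMap.id) fun _ _ ht ↦ ht).mem_of_injective
      (isInternal_barGrade hA hN i) (isInternal_barGrade hF hN i)
      (Module.Flat.rTensor_preserves_injective_linearMap _ hι) ?_
    exact hy ▸ preservesGrading_barB i hw
  obtain ⟨u, rfl⟩ := hconnecting y hyd ⟨w, hy.symm⟩
  obtain ⟨v, hv⟩ := hacyclic (w - (ι.restrictScalars K).rTensor _ u) (by
    rw [map_sub, barB_rTensor, hy, sub_self])
  refine ⟨(μ.restrictScalars K).rTensor _ v, ?_⟩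
  rw [barB_rTensor, hv, map_sub, (hexact (i + 1)).apply_apply_eq_zero, sub_zero]

end ConnectingMap

section SyzygyModule

variable {K : Type} [Field K] {n : ℕ} {M : Type} [AddCommGroup M] [Module K M]
  [Module (PS K n) M] [IsScalarTower K (PS K n) M] {GM : ℤ → Submodule K M}

variable (K n M) in
/-- The free cover `S ⊗ M → M`, `s ⊗ m ↦ s • m`. -/
def freeCover : PS K n ⊗[K] M →ₗ[PS K n] M :=
  LinearMap.liftBaseChange (PS K n) LinearMap.id

theorem freeCover_tmul (s : PS K n) (m : M) : freeCover K n M (s ⊗ₜ m) = s • m :=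
  LinearMap.liftBaseChange_tmul ..

variable (K n M) in
/-- The first syzygy module of `M`: the kernel of the free cover. It is a type of its own so that
instance search does not have to unfold it inside tensor products. -/
def Syzygy : Type := LinearMap.ker (freeCover K n M)

namespace Syzygy

instance : AddCommGroup (Syzygy K n M) :=
  inferInstanceAs (AddCommGroup (LinearMap.ker (freeCover K n M)))

instance : Module (PS K n) (Syzygy K n M) :=
  inferInstanceAs (Module (PS K n) (LinearMap.ker (freeCover K n M)))

instance : Module K (Syzygy K n M) :=
  inferInstanceAs (Module K (LinearMap.ker (freeCover K n M)))

instance : IsScalarTower K (PS K n) (Syzygy K n M) :=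
  inferInstanceAs (IsScalarTower K (PS K n) (LinearMap.ker (freeCover K n M)))

variable (K n M) in
/-- The inclusion of the syzygy module in `S ⊗ M`. -/
def incl : Syzygy K n M →ₗ[PS K n] PS K n ⊗[K] M :=
  (LinearMap.ker (freeCover K n M)).subtype

theorem incl_injective : Function.Injective (incl K n M) :=
  Subtype.val_injective

theorem exact_incl_freeCover : Function.Exact (incl K n M) (freeCover K n M) :=
  LinearMap.exact_subtype_ker_map _

variable (n) in
/-- The grading on the syzygy module induced by `S ⊗ M`. -/
def grade (GM : ℤ → Submodule K M) : ℤ → Submodule K (Syzygy K n M) := fun d ↦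
  (tensorGrade K (polyGrade K n) GM d).comap ((incl K n M).restrictScalars K)

theorem preservesGrading_incl : PreservesGrading (grade n GM) (tensorGrade K (polyGrade K n) GM)
    ((incl K n M).restrictScalars K) :=
  fun _ _ hx ↦ hx

end Syzygy

instance : SetLike.GradedSMul (polyGrade K n) (tensorGrade K (polyGrade K n) GM) where
  smul_mem a b s x hs hx := by
    have hle : tensorGrade K (polyGrade K n) GM b ≤
        (tensorGrade K (polyGrade K n) GM (a + b)).comap (smulBilin K n (PS K n ⊗[K] M) s) :=
      tensorGrade_le fun p q hpq f hf m hm ↦ tmul_mem_tensorGrade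
        (SetLike.GradedSMul.smul_mem hs hf) hm (by rw [vadd_eq_add]; lia)
    exact hle hx

theorem preservesGrading_freeCover [SetLike.GradedSMul (polyGrade K n) GM] :
    PreservesGrading (tensorGrade K (polyGrade K n) GM) GM
      ((freeCover K n M).restrictScalars K) := fun d ↦ by
  refine tensorGrade_le (P := (GM d).comap ((freeCover K n M).restrictScalars K))
    fun p q hpq s hs m hm ↦ ?_
  rw [Submodule.mem_comap, LinearMap.restrictScalars_apply, freeCover_tmul, ← hpq]
  exact SetLike.GradedSMul.smul_mem hs hm

namespace Syzygy

instance : SetLike.GradedSMul (polyGrade K n) (grade n GM) where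
  smul_mem a b s x hs hx := by
    rw [grade, Submodule.mem_comap, LinearMap.restrictScalars_apply, map_smul]
    exact SetLike.GradedSMul.smul_mem (B := tensorGrade K (polyGrade K n) GM) hs hx

theorem isInternal_grade [SetLike.GradedSMul (polyGrade K n) GM]
    (hM : DirectSum.IsInternal GM) : DirectSum.IsInternal (grade n GM) :=
  preservesGrading_freeCover.isInternal_comap_of_exact
    (isInternal_tensorGrade isInternal_polyGrade hM) hM
    (g := (incl K n M).restrictScalars K) incl_injective exact_incl_freeCover

theorem grade_eq_bot {a : ℤ} (hM : ∀ d < a, GM d = ⊥) {d : ℤ} (hd : d < a + 1) :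
    grade n GM d = ⊥ := by
  have hconst : tensorGrade K (polyGrade K n) GM d ≤ LinearMap.eqLocus LinearMap.id
      (TensorProduct.mk K (PS K n) M 1 ∘ₗ (freeCover K n M).restrictScalars K) := by
    refine tensorGrade_le fun p q hpq s hs m hm ↦ ?_
    rw [LinearMap.mem_eqLocus, LinearMap.id_apply, LinearMap.comp_apply,
      LinearMap.restrictScalars_apply, freeCover_tmul, TensorProduct.mk_apply]
    obtain rfl | ⟨e, rfl, he⟩ := eq_zero_or_isHomogeneous_of_mem_polyGrade hs
    · simp
    obtain rfl | he0 := Nat.eq_zero_or_pos e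
    · obtain ⟨c, rfl⟩ : ∃ c : K, s = c • 1 := ⟨_, by
        rw [smul_eq_C_mul, mul_one]
        exact totalDegree_eq_zero_iff_eq_C.1 (Nat.le_zero.1 he.totalDegree_le)⟩
      rw [smul_tmul, smul_assoc, one_smul]
    · obtain rfl : m = 0 := by simpa [hM q (by lia)] using hm
      simp
  rw [eq_bot_iff]
  rintro ⟨x, hx⟩ hxd
  have hx1 : x = 1 ⊗ₜ freeCover K n M x := hconst hxd
  rw [LinearMap.mem_ker.1 hx, tmul_zero] at hx1
  exact Subtype.ext hx1

end Syzygy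

end SyzygyModule

section Vanishing

variable {K : Type} [Field K] {n : ℕ} {N : Type} [AddCommGroup N] [Module K N]
  [Module (PS K n) N] [IsScalarTower K (PS K n) N] {GN : ℤ → Submodule K N}

theorem mem_range_barB_of_syzygy [SetLike.GradedSMul (polyGrade K n) GN]
    (hN : DirectSum.IsInternal GN) {M : Type} [AddCommGroup M] [Module K M] [Module (PS K n) M]
    [IsScalarTower K (PS K n) M] {GM : ℤ → Submodule K M} [SetLike.GradedSMul (polyGrade K n) GM]
    (hM : DirectSum.IsInternal GM) {i : ℕ} {d : ℤ}
    (hconnecting : ∀ y ∈ barGrade (Syzygy.grade n GM) GN i d,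
      ((Syzygy.incl K n M).restrictScalars K).rTensor _ y ∈
          LinearMap.range (barB K n N (PS K n ⊗[K] M) i) →
        y ∈ LinearMap.range (barB K n N (Syzygy K n M) i))
    {z : M ⊗[K] barD K n N (i + 1)} (hz : z ∈ barGrade GM GN (i + 1) d)
    (hbz : barB K n N M i z = 0) : z ∈ LinearMap.range (barB K n N M (i + 1)) := by
  let μ := (freeCover K n M).restrictScalars K
  let η := TensorProduct.mk K (PS K n) M 1
  have hμη (m : M) : μ (η m) = m := (freeCover_tmul 1 m).trans (one_smul _ m)
  have hz_eq : μ.rTensor _ (η.rTensor _ z) = z := by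
    rw [← LinearMap.rTensor_comp_apply, (LinearMap.ext hμη : μ ∘ₗ η = LinearMap.id)]
    exact LinearMap.rTensor_id_apply ..
  have hηgr : PreservesGrading GM (tensorGrade K (polyGrade K n) GM) η := fun d m hm ↦
    tmul_mem_tensorGrade one_mem_polyGrade hm (zero_add d)
  have hacyclic (x) (hx : barB K n N (PS K n ⊗[K] M) i x = 0) :
      x ∈ LinearMap.range (barB K n N (PS K n ⊗[K] M) (i + 1)) :=
    ⟨_, by
      simpa only [hx, map_zero, add_zero] using
        barB_baseChangeHomotopy_add (N := N) (TensorProduct.isBaseChange K M (PS K n)) i x⟩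
  rw [← hz_eq] at hbz ⊢
  exact rTensor_mem_range_barB_of_exact (Syzygy.isInternal_grade hM)
    (isInternal_tensorGrade isInternal_polyGrade hM) hN Syzygy.incl_injective
    Syzygy.exact_incl_freeCover (fun m ↦ ⟨η m, hμη m⟩) Syzygy.preservesGrading_incl hacyclic
    hconnecting (hηgr.tensorMap (g := LinearMap.id) (fun _ _ ht ↦ ht) hz) hbz

theorem mem_range_barB_of_lt [SetLike.GradedSMul (polyGrade K n) GN]
    (hN : DirectSum.IsInternal GN) (hN0 : ∀ d < 0, GN d = ⊥) (i : ℕ) {M : Type} [AddCommGroup M]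
    [Module K M] [Module (PS K n) M] [IsScalarTower K (PS K n) M] {GM : ℤ → Submodule K M}
    [SetLike.GradedSMul (polyGrade K n) GM] (hM : DirectSum.IsInternal GM) {a d : ℤ}
    (ha : ∀ p < a, GM p = ⊥) (hd : d < a + i + 1) {z : M ⊗[K] barD K n N (i + 1)}
    (hz : z ∈ barGrade GM GN (i + 1) d) (hbz : barB K n N M i z = 0) :
    z ∈ LinearMap.range (barB K n N M (i + 1)) := by
  induction i generalizing M a with
  | zero =>
    refine mem_range_barB_of_syzygy hN hM (fun y hy _ ↦ ?_) hz hbz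
    have hbot : barGrade (n := n) (Syzygy.grade n GM) GN 0 d = ⊥ :=
      tensorGrade_eq_bot (fun _ ↦ Syzygy.grade_eq_bot ha) hN0 (by simpa using hd)
    rw [hbot, Submodule.mem_bot] at hy
    exact hy ▸ zero_mem _
  | succ i ih =>
    refine mem_range_barB_of_syzygy hN hM (fun y hy ⟨x, hx⟩ ↦ ?_) hz hbz
    refine ih (Syzygy.isInternal_grade hM) (a := a + 1)
      (fun _ ↦ Syzygy.grade_eq_bot ha) (by push_cast at hd; lia) hy ?_
    refine (map_eq_zero_iff _ (Module.Flat.rTensor_preserves_injective_linearMap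
      ((Syzygy.incl K n M).restrictScalars K) Syzygy.incl_injective)).1 ?_
    rw [← barB_rTensor, ← hx, barB_barB]

end Vanishing

section GeneralScalars

variable {K : Type} [Field K]

theorem generallyScalar_of_forall {P : Kˣ → Prop} (h : ∀ l, P l) : generallyScalar K P :=
  ⟨1, one_ne_zero, fun l _ ↦ h l⟩

theorem generallyScalar.and {P Q : Kˣ → Prop} (hP : generallyScalar K P)
    (hQ : generallyScalar K Q) : generallyScalar K fun l ↦ P l ∧ Q l := by
  obtain ⟨F, hF, hFP⟩ := hP
  obtain ⟨G, hG, hGQ⟩ := hQ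
  refine ⟨F * G, mul_ne_zero hF hG, fun l hl ↦ ?_⟩
  rw [Polynomial.eval_mul] at hl
  exact ⟨hFP l (left_ne_zero_of_mul hl), hGQ l (right_ne_zero_of_mul hl)⟩

theorem generallyScalar.mono {P Q : Kˣ → Prop} (hP : generallyScalar K P) (h : ∀ l, P l → Q l) :
    generallyScalar K Q :=
  let ⟨F, hF, hFP⟩ := hP
  ⟨F, hF, fun l hl ↦ h l (hFP l hl)⟩

theorem generallyScalar_forall_lt {P : ℕ → Kˣ → Prop} (h : ∀ i, generallyScalar K (P i)) (m : ℕ) :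
    generallyScalar K fun l ↦ ∀ i < m, P i l := by
  induction m with
  | zero => exact generallyScalar_of_forall fun _ _ hi ↦ absurd hi (Nat.not_lt_zero _)
  | succ m ih => exact (ih.and (h m)).mono fun _ hl i hi ↦
      (Nat.lt_succ_iff_lt_or_eq.1 hi).elim (hl.1 i) fun h ↦ h ▸ hl.2

theorem exists_polynomial_eval_eq {V : Type*} [AddCommGroup V] [Module K V] (f : V →ₗ[K] K)
    (p : PolynomialModule K V) : ∃ P : Polynomial K, ∀ t, P.eval t = f (p.eval t) := by
  refine ⟨PolynomialModule.equivPolynomial (PolynomialModule.map K f p), fun t ↦ ?_⟩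
  rw [← Polynomial.coe_aeval_eq_eval, PolynomialModule.aeval_equivPolynomial,
    Algebra.linearMap_self, PolynomialModule.eval_map', LinearMap.id_apply]
  exact PolynomialModule.eval_map K f p t

end GeneralScalars

section PolynomialLimit

variable {R : Type*} [CommRing R] {V W Q : Type*} [AddCommGroup V] [Module R V] [AddCommGroup W]
  [Module R W] [AddCommGroup Q] [Module R Q]

/-- The limit as `λ → 0` of a family `Z` of submodules indexed by the units `λ`: all values `p(0)`
of polynomials `p` with coefficients in `V` such that `p(λ) ∈ Z λ` for every `λ`. -/
def polynomialLimit (Z : Rˣ → Submodule R V) : Submodule R V :=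
  (⨅ l, (Z l).comap (PolynomialModule.eval (l : R))).map (PolynomialModule.eval 0)

theorem mem_polynomialLimit {Z : Rˣ → Submodule R V} {v : V} : v ∈ polynomialLimit Z ↔
    ∃ p : PolynomialModule R V, (∀ l : Rˣ, p.eval (l : R) ∈ Z l) ∧ p.eval 0 = v := by
  simp only [polynomialLimit, Submodule.mem_map, Submodule.mem_iInf, Submodule.mem_comap]

theorem polynomialLimit_mono {Z Z' : Rˣ → Submodule R V} (h : ∀ l, Z l ≤ Z' l) :
    polynomialLimit Z ≤ polynomialLimit Z' :=
  Submodule.map_mono (iInf_mono fun l ↦ Submodule.comap_mono (h l))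

theorem map_mem_polynomialLimit (f : V →ₗ[R] W) {Z : Rˣ → Submodule R V} {v : V}
    (hv : v ∈ polynomialLimit Z) : f v ∈ polynomialLimit fun l ↦ (Z l).map f := by
  obtain ⟨p, hp, rfl⟩ := mem_polynomialLimit.1 hv
  have heval (t : R) : (PolynomialModule.map R f p).eval t = f (p.eval t) :=
    PolynomialModule.eval_map R f p t
  exact mem_polynomialLimit.2 ⟨_, fun l ↦ ⟨_, hp l, (heval l).symm⟩, heval 0⟩

theorem le_polynomialLimit_const (Z : Submodule R V) : Z ≤ polynomialLimit fun _ : Rˣ ↦ Z :=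
  fun v hv ↦ mem_polynomialLimit.2 ⟨PolynomialModule.single R 0 v, by simpa using hv, by simp⟩

theorem ker_lTensor_le_polynomialLimit {f : V →ₗ[R] W} (hf : Function.Surjective f)
    {W' : Rˣ → Type*} [∀ l, AddCommGroup (W' l)] [∀ l, Module R (W' l)]
    {g : ∀ l, V →ₗ[R] W' l} (h : LinearMap.ker f ≤ polynomialLimit fun l ↦ LinearMap.ker (g l)) :
    LinearMap.ker (f.lTensor Q) ≤ polynomialLimit fun l ↦ LinearMap.ker ((g l).lTensor Q) := by
  intro x hx
  obtain ⟨y, rfl⟩ := (lTensor_exact Q f.exact_subtype_ker_map hf x).1 hx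
  clear hx
  induction y with
  | zero => rw [map_zero]; exact zero_mem _
  | add y z hy hz => rw [map_add]; exact add_mem hy hz
  | tmul q v =>
    refine polynomialLimit_mono (fun l ↦ ?_)
      (map_mem_polynomialLimit (TensorProduct.mk R Q V q) (h v.2))
    rw [Submodule.map_le_iff_le_comap]
    intro u hu
    rw [Submodule.mem_comap, LinearMap.mem_ker, TensorProduct.mk_apply, LinearMap.lTensor_tmul,
      LinearMap.mem_ker.1 hu, tmul_zero]

end PolynomialLimit

section Semicontinuity

variable {K : Type} [Field K] {V : Type*} [AddCommGroup V] [Module K V]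

theorem generallyScalar_linearIndependent {ι : Type*} [Finite ι] (p : ι → PolynomialModule K V)
    (hp : LinearIndependent K fun k ↦ (p k).eval 0) :
    generallyScalar K fun l ↦ LinearIndependent K fun k ↦ (p k).eval (l : K) := by
  classical
  have := Fintype.ofFinite ι
  obtain ⟨f, hf⟩ := LinearMap.exists_leftInverse_of_injective _
    (LinearMap.ker_eq_bot.2 hp.fintypeLinearCombination_injective)
  choose P hP using fun k k' ↦ exists_polynomial_eval_eq (LinearMap.proj k' ∘ₗ f) (p k)
  have hdet (t : K) : (Matrix.of P).det.eval t =
      (Matrix.of fun k ↦ f ((p k).eval t)).det := by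
    rw [← Polynomial.coe_evalRingHom, RingHom.map_det]
    exact congrArg Matrix.det (Matrix.ext fun k k' ↦ hP k k' t)
  have hf0 (k : ι) : f ((p k).eval 0) = Pi.single k 1 := by
    simpa using LinearMap.congr_fun hf (Pi.single k 1)
  refine ⟨(Matrix.of P).det, fun h ↦ ?_, fun l hl ↦ ?_⟩
  · have hone : (Matrix.of fun k ↦ f ((p k).eval 0)) = 1 := by
      ext k k'
      simp only [Matrix.of_apply, hf0, Matrix.one_apply, Pi.single_apply, eq_comm]
    simpa [h, hone] using hdet 0
  · rw [hdet] at hl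
    exact LinearIndependent.of_comp f <| Matrix.linearIndependent_rows_of_isUnit <|
      (Matrix.isUnit_iff_isUnit_det _).2 hl.isUnit

theorem generallyScalar_finrank_le {Z₀ : Submodule K V} {Z : Kˣ → Submodule K V}
    [Module.Finite K Z₀] [∀ l, Module.Finite K (Z l)] (h : Z₀ ≤ polynomialLimit Z) :
    generallyScalar K fun l ↦ Module.finrank K Z₀ ≤ Module.finrank K (Z l) := by
  let b := Module.finBasis K Z₀
  choose p hpZ hp0 using fun k ↦ mem_polynomialLimit.1 (h (b k).2)
  have hb : LinearIndependent K fun k ↦ (p k).eval 0 := by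
    simp_rw [hp0]
    exact b.linearIndependent.map' Z₀.subtype Z₀.ker_subtype
  refine (generallyScalar_linearIndependent p hb).mono fun l hl ↦ ?_
  have hlZ : LinearIndependent K fun k ↦ (⟨(p k).eval (l : K), hpZ k l⟩ : Z l) :=
    LinearIndependent.of_comp (Z l).subtype hl
  simpa using hlZ.fintype_card_le_finrank

end Semicontinuity

section ComplementTransfer

variable {R : Type*} [CommRing R] {ι A B C : Type*} [DecidableEq ι] [AddCommGroup A] [Module R A]
  [AddCommGroup B] [Module R B] [AddCommGroup C] [Module R C] {GA : ι → Submodule R A}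

theorem exists_injective_preservesGrading_map (hA : DirectSum.IsInternal GA) {π : A →ₗ[R] B}
    {ρ : A →ₗ[R] C} {T : Submodule R A} (hπ : Function.Surjective π)
    (hTπ : IsCompl T (LinearMap.ker π)) (hTρ : Disjoint T (LinearMap.ker ρ))
    (hT : ∀ d, ∀ t ∈ T, gradedProj hA d t ∈ T)
    (hker : ∀ d, ∀ a ∈ LinearMap.ker π, gradedProj hA d a ∈ LinearMap.ker π) :
    ∃ θ : B →ₗ[R] C, Function.Injective θ ∧
      PreservesGrading (fun d ↦ (GA d).map π) (fun d ↦ (GA d).map ρ) θ := by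
  have hinj : Function.Injective (π.domRestrict T) :=
    LinearMap.injective_domRestrict_iff.2 hTπ.disjoint
  have hsurj : Function.Surjective (π.domRestrict T) := LinearMap.range_eq_top.1 <| by
    have hmap : (T ⊔ LinearMap.ker π).map π = T.map π := by
      rw [Submodule.map_sup, LinearMap.le_ker_iff_map.1 le_rfl, sup_bot_eq]
    rw [LinearMap.range_domRestrict, ← hmap, hTπ.sup_eq_top, Submodule.map_top,
      LinearMap.range_eq_top.2 hπ]
  let e := LinearEquiv.ofBijective (π.domRestrict T) ⟨hinj, hsurj⟩
  have he (b : B) : π (e.symm b) = b := e.apply_symm_apply b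
  refine ⟨ρ.domRestrict T ∘ₗ e.symm.toLinearMap,
    (LinearMap.injective_domRestrict_iff.2 hTρ).comp e.symm.injective, ?_⟩
  rintro d _ ⟨a, ha, rfl⟩
  have hproj : gradedProj hA d (e.symm (π a)) = e.symm (π a) := by
    have hπproj := hker d (a - e.symm (π a)) (by rw [LinearMap.mem_ker, map_sub, he, sub_self])
    rw [LinearMap.mem_ker, map_sub, gradedProj_of_mem hA ha, map_sub, sub_eq_zero] at hπproj
    exact congrArg Subtype.val (hinj (a₁ := ⟨_, hT d _ (e.symm (π a)).2⟩) (a₂ := e.symm (π a))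
      (hπproj.symm.trans (he _).symm))
  have hmem : (e.symm (π a) : A) ∈ GA d := hproj ▸ gradedProj_mem hA d (e.symm (π a) : A)
  exact ⟨_, hmem, rfl⟩

end ComplementTransfer

section StandardMonomials

theorem exists_isCompl_span_image_basis {K V κ : Type*} [DivisionRing K] [AddCommGroup V]
    [Module K V] (b : Module.Basis κ K V) (I : Submodule K V) :
    ∃ B : Set κ, IsCompl (Submodule.span K (b '' B)) I := by
  obtain ⟨B, -, -, hspan, hli⟩ := exists_linearIndepOn_extension
    (linearIndepOn_empty K (I.mkQ ∘ b)) (Set.empty_subset Set.univ)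
  refine ⟨B, ?_, ?_⟩
  · have hdisj := Submodule.range_ker_disjoint (f := I.mkQ) (v := fun k : B ↦ b k) hli
    rwa [I.ker_mkQ, ← Set.image_eq_range] at hdisj
  · have htop : (⊤ : Submodule K V).map I.mkQ ≤ (Submodule.span K (b '' B)).map I.mkQ := by
      rw [← b.span_eq, Submodule.map_span, Submodule.map_span, ← Set.range_comp,
        ← Set.image_comp, ← Set.image_univ]
      exact Submodule.span_le.2 hspan
    rw [codisjoint_iff_le_sup, sup_comm, ← Submodule.comap_map_mkQ]
    exact Submodule.map_le_iff_le_comap.1 htop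

theorem exists_isCompl_restrictSupport {σ K : Type*} [Field K]
    (I : Submodule K (MvPolynomial σ K)) :
    ∃ B : Set (σ →₀ ℕ), IsCompl (restrictSupport K B) I := by
  simpa only [restrictSupport_eq_span, coe_basisMonomials] using
    exists_isCompl_span_image_basis (basisMonomials σ K) I

end StandardMonomials

section InitialIdeal

variable {K : Type} [Field K] {n : ℕ} {w : Fin n → ℕ} {J : Ideal (PS K n)}

theorem wdeg_eq_weight (m : Fin n →₀ ℕ) : wdeg n w m = Finsupp.weight w m := by
  simp [wdeg, Finsupp.weight_apply, Finsupp.sum_fintype, mul_comm]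

theorem initialForm_eq_weightedHomogeneousComponent (f : PS K n) :
    initialForm K n w f = weightedHomogeneousComponent w (f.support.sup (wdeg n w)) f := by
  classical
  ext m
  simp only [initialForm, coeff_sum, coeff_monomial, coeff_weightedHomogeneousComponent,
    Finset.sum_ite_eq', Finset.mem_filter, mem_support_iff, wdeg_eq_weight]
  grind

theorem initialForm_ne_zero {f : PS K n} (hf : f ≠ 0) : initialForm K n w f ≠ 0 := by
  classical
  obtain ⟨m, hm, hsup⟩ := Finset.exists_mem_eq_sup f.support (support_nonempty.2 hf) (wdeg n w)
  refine ne_zero_iff.2 ⟨m, ?_⟩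
  rw [initialForm_eq_weightedHomogeneousComponent, coeff_weightedHomogeneousComponent,
    ← wdeg_eq_weight, if_pos hsup.symm]
  exact mem_support_iff.1 hm

theorem weightedHomogeneousComponent_mem_initialIdealW {f : PS K n} (hf : f ∈ J) {a : ℕ}
    (ha : ∀ m ∈ f.support, wdeg n w m ≤ a) :
    weightedHomogeneousComponent w a f ∈ initialIdealW K n w J := by
  obtain h | h := (Finset.sup_le ha).eq_or_lt
  · rw [← h, ← initialForm_eq_weightedHomogeneousComponent]
    exact Ideal.subset_span ⟨f, hf, rfl⟩
  · rw [weightedHomogeneousComponent_eq_zero' a f fun m hm hma ↦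
      ((Finset.le_sup hm).trans_lt h).ne ((wdeg_eq_weight m).trans hma)]
    exact zero_mem _

theorem isHomog_span {s : Set (PS K n)}
    (hs : ∀ f ∈ s, ∀ d, homogeneousComponent d f ∈ Ideal.span s) : IsHomog K n (Ideal.span s) := by
  let _ : GradedAlgebra (homogeneousSubmodule (Fin n) K) := MvPolynomial.gradedAlgebra
  have hhomogeneous : (Ideal.span s).IsHomogeneous (homogeneousSubmodule (Fin n) K) := by
    refine (Ideal.IsHomogeneous.iff_eq _ _).2 <|
      (Ideal.toIdeal_homogeneousCore_le _ _).antisymm (Ideal.span_le.2 fun f hf ↦ ?_)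
    rw [SetLike.mem_coe, ← sum_homogeneousComponent f]
    exact sum_mem fun d _ ↦ Ideal.mem_homogeneousCore_of_homogeneous_of_mem
      ⟨d, homogeneousComponent_isHomogeneous d f⟩ (hs f hf d)
  intro f hf d
  rw [← decomposition.decompose'_apply]
  exact hhomogeneous d hf

theorem isHomog_initialIdealW (hJ : IsHomog K n J) : IsHomog K n (initialIdealW K n w J) := by
  classical
  refine isHomog_span ?_
  rintro _ ⟨f, hf, rfl⟩ d
  have hcomm : homogeneousComponent d (initialForm K n w f) =
      weightedHomogeneousComponent w (f.support.sup (wdeg n w)) (homogeneousComponent d f) := by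
    ext m
    simp only [initialForm_eq_weightedHomogeneousComponent, coeff_homogeneousComponent,
      coeff_weightedHomogeneousComponent]
    split_ifs <;> rfl
  rw [hcomm]
  refine weightedHomogeneousComponent_mem_initialIdealW (hJ f hf d) fun m hm ↦
    Finset.le_sup (mem_support_iff.2 fun hmf ↦ mem_support_iff.1 hm ?_)
  rw [coeff_homogeneousComponent, hmf, ite_self]

end InitialIdeal

section DiagonalCoordinates

variable {K : Type} [Field K] {n : ℕ} {w : Fin n → ℕ} {J : Ideal (PS K n)}

theorem coeff_diagCoord (l : Kˣ) (f : PS K n) (m : Fin n →₀ ℕ) :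
    coeff m (diagCoord K n w l f) = ((l⁻¹ : Kˣ) : K) ^ wdeg n w m * coeff m f := by
  classical
  induction f using MvPolynomial.induction_on' with
  | monomial u a =>
    have hmonomial : diagCoord K n w l (monomial u a) =
        ((l⁻¹ : Kˣ) : K) ^ wdeg n w u • monomial u a := by
      simp only [diagCoord, smul_eq_C_mul, monomial_eq, wdeg, Finsupp.prod_fintype, pow_zero,
        implies_true, map_mul, map_prod, map_pow, aeval_X, algHom_C, algebraMap_eq, mul_pow,
        Finset.prod_mul_distrib, pow_mul, ← Finset.prod_pow_eq_pow_sum]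
      ring
    rw [hmonomial, coeff_smul, smul_eq_mul, coeff_monomial]
    split_ifs with h
    · rw [h]
    · simp only [mul_zero]
  | add p q hp hq => rw [map_add, coeff_add, hp, hq, coeff_add, mul_add]

theorem support_diagCoord (l : Kˣ) (f : PS K n) :
    (diagCoord K n w l f).support = f.support := by
  ext m
  simp [coeff_diagCoord]

theorem diagCoord_surjective (l : Kˣ) : Function.Surjective (diagCoord K n w l) := fun f ↦ by
  refine ⟨diagCoord K n w l⁻¹ f, ext _ _ fun m ↦ ?_⟩
  rw [coeff_diagCoord, coeff_diagCoord, ← mul_assoc, ← mul_pow, inv_inv, Units.inv_mul, one_pow,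
    one_mul]

theorem homogeneousComponent_diagCoord (l : Kˣ) (d : ℕ) (f : PS K n) :
    homogeneousComponent d (diagCoord K n w l f) =
      diagCoord K n w l (homogeneousComponent d f) := by
  ext m
  simp only [coeff_diagCoord, coeff_homogeneousComponent, mul_ite, mul_zero]

theorem mem_map_diagCoord {l : Kˣ} {g : PS K n} :
    g ∈ J.map (diagCoord K n w l) ↔ ∃ f ∈ J, diagCoord K n w l f = g :=
  Ideal.mem_map_iff_of_surjective _ (diagCoord_surjective l)

theorem isHomog_map_diagCoord (hJ : IsHomog K n J) (l : Kˣ) :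
    IsHomog K n (J.map (diagCoord K n w l)) := by
  intro g hg d
  obtain ⟨f, hf, rfl⟩ := mem_map_diagCoord.1 hg
  rw [homogeneousComponent_diagCoord]
  exact Ideal.mem_map_of_mem _ (hJ f hf d)

/-- The polynomial `∑ λ ^ (a - w · m) c_m x ^ m` in `λ` attached to `f = ∑ c_m x ^ m`, where `a` is
the largest `w`-weight of a term of `f`. -/
def initialDeformation (w : Fin n → ℕ) (f : PS K n) : PolynomialModule K (PS K n) :=
  ∑ m ∈ f.support,
    PolynomialModule.single K (f.support.sup (wdeg n w) - wdeg n w m) (monomial m (coeff m f))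

theorem initialDeformation_eval (f : PS K n) (t : K) :
    (initialDeformation w f).eval t =
      ∑ m ∈ f.support, t ^ (f.support.sup (wdeg n w) - wdeg n w m) • monomial m (coeff m f) := by
  simp only [initialDeformation, map_sum, PolynomialModule.eval_single]

theorem initialDeformation_eval_zero (f : PS K n) :
    (initialDeformation w f).eval 0 = initialForm K n w f := by
  rw [initialDeformation_eval, initialForm, Finset.sum_filter]
  refine Finset.sum_congr rfl fun m hm ↦ ?_
  have hle : wdeg n w m ≤ f.support.sup (wdeg n w) := Finset.le_sup hm
  split_ifs with h
  · rw [h, Nat.sub_self, pow_zero, one_smul]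
  · rw [zero_pow (by lia), zero_smul]

theorem initialDeformation_eval_unit (f : PS K n) (l : Kˣ) :
    (initialDeformation w f).eval (l : K) =
      (l : K) ^ f.support.sup (wdeg n w) • diagCoord K n w l f := by
  rw [initialDeformation_eval, (diagCoord K n w l f).as_sum, support_diagCoord, Finset.smul_sum]
  refine Finset.sum_congr rfl fun m hm ↦ ?_
  rw [coeff_diagCoord, smul_monomial, smul_monomial, smul_eq_mul, smul_eq_mul, ← mul_assoc,
    pow_sub₀ _ l.ne_zero (Finset.le_sup hm), Units.val_inv_eq_inv_val, inv_pow]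

theorem initialIdealW_le_polynomialLimit : (initialIdealW K n w J).restrictScalars K ≤
    polynomialLimit fun l : Kˣ ↦ (J.map (diagCoord K n w l)).restrictScalars K := by
  intro g hg
  rw [Submodule.restrictScalars_mem] at hg
  induction hg using Submodule.span_induction with
  | mem g h =>
    obtain ⟨f, hf, rfl⟩ := h
    refine mem_polynomialLimit.2 ⟨_, fun l ↦ ?_, initialDeformation_eval_zero f⟩
    rw [initialDeformation_eval_unit]
    exact Submodule.smul_mem _ _ (Ideal.mem_map_of_mem _ hf)
  | zero => exact zero_mem _
  | add x y _ _ hx hy => exact add_mem hx hy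
  | smul a x _ hx =>
    refine polynomialLimit_mono (fun l ↦ ?_) (map_mem_polynomialLimit (LinearMap.mulLeft K a) hx)
    rintro _ ⟨f, hf, rfl⟩
    exact Ideal.mul_mem_left _ a hf

theorem disjoint_restrictSupport_map_diagCoord {B : Set (Fin n →₀ ℕ)}
    (hB : Disjoint (restrictSupport K B) ((initialIdealW K n w J).restrictScalars K)) (l : Kˣ) :
    Disjoint (restrictSupport K B) ((J.map (diagCoord K n w l)).restrictScalars K) := by
  classical
  refine Submodule.disjoint_def.2 fun g hgB hg ↦ ?_
  obtain ⟨f, hf, rfl⟩ := mem_map_diagCoord.1 hg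
  rw [mem_restrictSupport_iff, support_diagCoord] at hgB
  by_contra hne
  refine initialForm_ne_zero (w := w) (f := f) (fun h ↦ hne (by rw [h, map_zero])) <|
    Submodule.disjoint_def.1 hB _ ((mem_restrictSupport_iff K).2 fun m hm ↦ hgB ?_)
      (Ideal.subset_span ⟨f, hf, rfl⟩)
  contrapose! hm
  rw [Finset.mem_coe, notMem_support_iff] at hm ⊢
  rw [initialForm_eq_weightedHomogeneousComponent, coeff_weightedHomogeneousComponent, hm, ite_self]

theorem ker_mkₐ_toLinearMap (I : Ideal (PS K n)) :
    LinearMap.ker (Ideal.Quotient.mkₐ K I).toLinearMap = I.restrictScalars K := by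
  ext f
  exact Ideal.Quotient.eq_zero_iff_mem

theorem exists_injective_initialIdealW_map_diagCoord (hJ : IsHomog K n J) (l : Kˣ) :
    ∃ θ : (PS K n ⧸ initialIdealW K n w J) →ₗ[K] (PS K n ⧸ J.map (diagCoord K n w l)),
      Function.Injective θ ∧ PreservesGrading (quotGrade K n (initialIdealW K n w J))
        (quotGrade K n (J.map (diagCoord K n w l))) θ := by
  obtain ⟨B, hB⟩ := exists_isCompl_restrictSupport ((initialIdealW K n w J).restrictScalars K)
  refine exists_injective_preservesGrading_map isInternal_polyGrade (T := restrictSupport K B)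
    (Ideal.Quotient.mkₐ_surjective K _) ?_ ?_
    (fun d f hf ↦ gradedProj_polyGrade_mem_restrictSupport d hf) fun d f hf ↦ ?_
  · rwa [ker_mkₐ_toLinearMap]
  · rw [ker_mkₐ_toLinearMap]
    exact disjoint_restrictSupport_map_diagCoord hB.disjoint l
  · rw [ker_mkₐ_toLinearMap] at hf ⊢
    exact gradedProj_polyGrade_mem (isHomog_initialIdealW hJ) d hf

end DiagonalCoordinates

section FinrankCounts

variable {K A B : Type*} [DivisionRing K] [AddCommGroup A] [Module K A] [AddCommGroup B]
  [Module K B]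

theorem finrank_map_add_finrank_ker_inf (f : A →ₗ[K] B) (P : Submodule K A) [Module.Finite K P] :
    Module.finrank K (P.map f) + Module.finrank K ↥(LinearMap.ker f ⊓ P) = Module.finrank K P := by
  have hker : (LinearMap.ker (f.domRestrict P)).map P.subtype = LinearMap.ker f ⊓ P := by
    rw [LinearMap.ker_domRestrict, Submodule.map_comap_subtype, inf_comm]
  rw [← LinearMap.finrank_range_add_finrank_ker (f.domRestrict P), LinearMap.range_domRestrict,
    ← hker, Submodule.finrank_map_subtype_eq]

theorem finrank_map_add_finrank_comap_inf (f : A →ₗ[K] B) (P : Submodule K A) [Module.Finite K P]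
    (Q : Submodule K B) :
    Module.finrank K (P.map f) + Module.finrank K ↥(Q.comap f ⊓ P) =
      Module.finrank K P + Module.finrank K ↥(Q ⊓ P.map f) := by
  have : Module.Finite K ↥(Q.comap f ⊓ P) := Submodule.finiteDimensional_inf_right _ _
  have hmap : (Q.comap f ⊓ P).map f = Q ⊓ P.map f := by
    rw [inf_comm, ← Submodule.map_inf_eq_map_inf_comap, inf_comm]
  have hker : LinearMap.ker f ⊓ (Q.comap f ⊓ P) = LinearMap.ker f ⊓ P := by
    rw [← inf_assoc, inf_eq_left.2 (LinearMap.ker_le_comap f)]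
  rw [← finrank_map_add_finrank_ker_inf f P,
    ← finrank_map_add_finrank_ker_inf f (Q.comap f ⊓ P), hmap, hker]
  lia

end FinrankCounts

section GradedLimit

variable {R : Type*} [CommRing R] {ι V : Type*} [DecidableEq ι] [AddCommGroup V] [Module R V]
  {GV : ι → Submodule R V}

theorem inf_le_polynomialLimit_inf (hV : DirectSum.IsInternal GV) {Z₀ : Submodule R V}
    {Z : Rˣ → Submodule R V} (h : Z₀ ≤ polynomialLimit Z)
    (hZ : ∀ l d, ∀ v ∈ Z l, gradedProj hV d v ∈ Z l) (d : ι) :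
    Z₀ ⊓ GV d ≤ polynomialLimit fun l ↦ Z l ⊓ GV d := by
  rintro v ⟨hv, hvd⟩
  rw [← gradedProj_of_mem hV hvd]
  refine polynomialLimit_mono (fun l ↦ ?_) (map_mem_polynomialLimit (gradedProj hV d) (h hv))
  rintro _ ⟨u, hu, rfl⟩
  exact ⟨hZ l d u hu, gradedProj_mem hV d u⟩

end GradedLimit

section BarMapGrade

variable {K : Type} [Field K] {n : ℕ} {M N N' : Type} [AddCommGroup M] [Module K M]
  [AddCommGroup N] [Module K N] [AddCommGroup N'] [Module K N']
  {GM : ℤ → Submodule K M} {GN : ℤ → Submodule K N} {GN' : ℤ → Submodule K N'}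

theorem barGrade_map_barMap (hM : DirectSum.IsInternal GM) (hN : DirectSum.IsInternal GN)
    (hN' : DirectSum.IsInternal GN') {ψ : N →ₗ[K] N'} (hψ : Function.Surjective ψ)
    (hψgr : PreservesGrading GN GN' ψ) (i : ℕ) (d : ℤ) :
    (barGrade GM GN i d).map (barMap (n := n) M ψ i) = barGrade GM GN' i d := by
  rw [(hψgr.barMap i).map_eq_range_inf (isInternal_barGrade hM hN i)
    (isInternal_barGrade hM hN' i), LinearMap.range_eq_top.2
      (LinearMap.lTensor_surjective M (barDMap_surjective hψ i)), top_inf_eq]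

theorem finrank_barGrade_le_of_injective {θ : N →ₗ[K] N'} (hθ : Function.Injective θ)
    (hθgr : PreservesGrading GN GN' θ) (i : ℕ) (d : ℤ)
    [Module.Finite K (barGrade (n := n) GM GN' i d)] :
    Module.finrank K (barGrade (n := n) GM GN i d) ≤
      Module.finrank K (barGrade (n := n) GM GN' i d) := by
  have hinj : Function.Injective (barMap (n := n) M θ i) :=
    Module.Flat.lTensor_preserves_injective_linearMap _ (barDMap_injective hθ i)
  refine LinearMap.finrank_le_finrank_of_injective
    (f := (barMap M θ i).restrict fun _ hx ↦ hθgr.barMap i hx) ?_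
  exact fun x y hxy ↦ Subtype.ext (hinj (congrArg Subtype.val hxy))

end BarMapGrade

section BoundaryPreimage

variable {K : Type} [Field K] {n : ℕ}
  {N N' : Type} [AddCommGroup N] [Module K N] [Module (PS K n) N] [IsScalarTower K (PS K n) N]
  [AddCommGroup N'] [Module K N'] [Module (PS K n) N'] [IsScalarTower K (PS K n) N']
  {M : Type} [AddCommGroup M] [Module K M] [Module (PS K n) M] [IsScalarTower K (PS K n) M]
  {GM : ℤ → Submodule K M} {GN : ℤ → Submodule K N} {GN' : ℤ → Submodule K N'}

/-- The elements of the `i`-th term of the bar complex of `N` whose images in the bar complex of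
`N'` are boundaries. For surjective `φ`, these spaces turn the homology of the bar complex of `N'`
into a matter of subspaces of a complex that does not depend on `N'`. -/
def boundaryPreimage (M : Type) [AddCommGroup M] [Module K M] [Module (PS K n) M]
    [IsScalarTower K (PS K n) M] (φ : N →ₗ[PS K n] N') (i : ℕ) :
    Submodule K (M ⊗[K] barD K n N i) :=
  (LinearMap.range (barB K n N' M i)).comap (barMap M (φ.restrictScalars K) i)

variable {φ : N →ₗ[PS K n] N'}

theorem gradedProj_mem_boundaryPreimage [SetLike.GradedSMul (polyGrade K n) GM]
    [SetLike.GradedSMul (polyGrade K n) GN'] (hM : DirectSum.IsInternal GM)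
    (hN : DirectSum.IsInternal GN) (hN' : DirectSum.IsInternal GN')
    (hφ : PreservesGrading GN GN' (φ.restrictScalars K)) (i : ℕ) (d : ℤ)
    {v : M ⊗[K] barD K n N i} (hv : v ∈ boundaryPreimage M φ i) :
    gradedProj (isInternal_barGrade hM hN i) d v ∈ boundaryPreimage M φ i := by
  obtain ⟨y, hy⟩ := hv
  refine ⟨gradedProj (isInternal_barGrade hM hN' (i + 1)) d y, ?_⟩
  rw [(preservesGrading_barB i).map_gradedProj _ (isInternal_barGrade hM hN' i), hy,
    (hφ.barMap i).map_gradedProj]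

theorem finrank_barGrade_add_finrank_boundaryPreimage (hM : DirectSum.IsInternal GM)
    (hN : DirectSum.IsInternal GN) (hN' : DirectSum.IsInternal GN') (hφ : Function.Surjective φ)
    (hφgr : PreservesGrading GN GN' (φ.restrictScalars K)) (i : ℕ) (d : ℤ)
    [Module.Finite K (barGrade (n := n) GM GN i d)] :
    Module.finrank K (barGrade (n := n) GM GN' i d) +
        Module.finrank K ↥(boundaryPreimage M φ i ⊓ barGrade GM GN i d) =
      Module.finrank K (barGrade (n := n) GM GN i d) +
        Module.finrank K ↥(LinearMap.range (barB K n N' M i) ⊓ barGrade GM GN' i d) := by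
  rw [← barGrade_map_barMap hM hN hN' hφ hφgr]
  exact finrank_map_add_finrank_comap_inf _ _ _

theorem finrank_range_barB_add_finrank_ker_barB [SetLike.GradedSMul (polyGrade K n) GM]
    [SetLike.GradedSMul (polyGrade K n) GN] (hM : DirectSum.IsInternal GM)
    (hN : DirectSum.IsInternal GN) (i : ℕ) (d : ℤ)
    [Module.Finite K (barGrade (n := n) GM GN (i + 1) d)] :
    Module.finrank K ↥(LinearMap.range (barB K n N M i) ⊓ barGrade GM GN i d) +
        Module.finrank K ↥(LinearMap.ker (barB K n N M i) ⊓ barGrade GM GN (i + 1) d) =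
      Module.finrank K (barGrade (n := n) GM GN (i + 1) d) := by
  rw [← (preservesGrading_barB i).map_eq_range_inf (isInternal_barGrade hM hN (i + 1))
    (isInternal_barGrade hM hN i)]
  exact finrank_map_add_finrank_ker_inf _ _

theorem torStrandDim_zero_add (hM : DirectSum.IsInternal GM)
    (hN : DirectSum.IsInternal GN) (hN' : DirectSum.IsInternal GN') (hφ : Function.Surjective φ)
    (hφgr : PreservesGrading GN GN' (φ.restrictScalars K)) (d : ℤ)
    [Module.Finite K (barGrade (n := n) GM GN 0 d)] :
    torStrandDim K n N' M GM GN' 0 d +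
        Module.finrank K ↥(boundaryPreimage M φ 0 ⊓ barGrade GM GN 0 d) =
      Module.finrank K (barGrade (n := n) GM GN 0 d) := by
  have : Module.Finite K (barGrade (n := n) GM GN' 0 d) := by
    rw [← barGrade_map_barMap hM hN hN' hφ hφgr]; infer_instance
  have hZ := finrank_barGrade_add_finrank_boundaryPreimage hM hN hN' hφ hφgr 0 d
  have hle : Module.finrank K ↥(LinearMap.range (barB K n N' M 0) ⊓ barGrade GM GN' 0 d) ≤
    Module.finrank K (barGrade (n := n) GM GN' 0 d) := Submodule.finrank_mono inf_le_right
  rw [torStrandDim]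
  lia

theorem torStrandDim_succ_add [SetLike.GradedSMul (polyGrade K n) GM]
    [SetLike.GradedSMul (polyGrade K n) GN'] (hM : DirectSum.IsInternal GM)
    (hN : DirectSum.IsInternal GN) (hN' : DirectSum.IsInternal GN') (hφ : Function.Surjective φ)
    (hφgr : PreservesGrading GN GN' (φ.restrictScalars K)) (i : ℕ) (d : ℤ)
    [∀ k, Module.Finite K (barGrade (n := n) GM GN k d)] :
    torStrandDim K n N' M GM GN' (i + 1) d +
        (Module.finrank K ↥(boundaryPreimage M φ (i + 1) ⊓ barGrade GM GN (i + 1) d) +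
          Module.finrank K ↥(boundaryPreimage M φ i ⊓ barGrade GM GN i d) +
          Module.finrank K (barGrade (n := n) GM GN' i d)) =
      Module.finrank K (barGrade (n := n) GM GN (i + 1) d) +
        Module.finrank K (barGrade (n := n) GM GN i d) := by
  have hfinite (k : ℕ) : Module.Finite K (barGrade (n := n) GM GN' k d) := by
    rw [← barGrade_map_barMap hM hN hN' hφ hφgr]; infer_instance
  have hZ := finrank_barGrade_add_finrank_boundaryPreimage hM hN hN' hφ hφgr i d
  have hZsucc := finrank_barGrade_add_finrank_boundaryPreimage hM hN hN' hφ hφgr (i + 1) d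
  have hrank := finrank_range_barB_add_finrank_ker_barB (n := n) hM hN' i d
  have : Module.Finite K ↥(LinearMap.ker (barB K n N' M i) ⊓ barGrade GM GN' (i + 1) d) :=
    Submodule.finiteDimensional_inf_right _ _
  have hle : Module.finrank K
        ↥(LinearMap.range (barB K n N' M (i + 1)) ⊓ barGrade GM GN' (i + 1) d) ≤
      Module.finrank K ↥(LinearMap.ker (barB K n N' M i) ⊓ barGrade GM GN' (i + 1) d) :=
    Submodule.finrank_mono <| inf_le_inf_right _ fun _ ⟨y, hy⟩ ↦ hy ▸ barB_barB i y
  rw [torStrandDim]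
  lia

end BoundaryPreimage

section BoundaryPreimageLimit

variable {K : Type} [Field K] {n : ℕ} {N N₀ : Type} {N' : Kˣ → Type}
  [AddCommGroup N] [Module K N] [AddCommGroup N₀] [Module K N₀]
  [∀ l, AddCommGroup (N' l)] [∀ l, Module K (N' l)]

theorem ker_barDMap_le_polynomialLimit {φ₀ : N →ₗ[K] N₀} {φ : ∀ l, N →ₗ[K] N' l}
    (hφ₀ : Function.Surjective φ₀)
    (hlim : LinearMap.ker φ₀ ≤ polynomialLimit fun l ↦ LinearMap.ker (φ l)) :
    ∀ i, LinearMap.ker (barDMap (n := n) φ₀ i) ≤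
      polynomialLimit fun l ↦ LinearMap.ker (barDMap (φ l) i)
  | 0 => hlim
  | i + 1 => ker_lTensor_le_polynomialLimit (barDMap_surjective hφ₀ i)
      (ker_barDMap_le_polynomialLimit hφ₀ hlim i)

variable {M : Type} [AddCommGroup M] [Module K M] [Module (PS K n) M] [IsScalarTower K (PS K n) M]
  [Module (PS K n) N] [IsScalarTower K (PS K n) N]
  [Module (PS K n) N₀] [IsScalarTower K (PS K n) N₀]
  [∀ l, Module (PS K n) (N' l)] [∀ l, IsScalarTower K (PS K n) (N' l)]
  {φ₀ : N →ₗ[PS K n] N₀} {φ : ∀ l, N →ₗ[PS K n] N' l}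

theorem range_barB_le_boundaryPreimage (ψ : N →ₗ[PS K n] N₀) (i : ℕ) :
    LinearMap.range (barB K n N M i) ≤ boundaryPreimage M ψ i := by
  rintro _ ⟨x, rfl⟩
  exact ⟨barMap M (ψ.restrictScalars K) (i + 1) x, barB_barMap ψ i x⟩

theorem ker_barMap_le_boundaryPreimage (ψ : N →ₗ[PS K n] N₀) (i : ℕ) :
    LinearMap.ker (barMap M (ψ.restrictScalars K) i) ≤ boundaryPreimage M ψ i :=
  LinearMap.ker_le_comap _

theorem boundaryPreimage_eq_sup {ψ : N →ₗ[PS K n] N₀} (hψ : Function.Surjective ψ) (i : ℕ) :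
    boundaryPreimage M ψ i =
      LinearMap.range (barB K n N M i) ⊔ LinearMap.ker (barMap M (ψ.restrictScalars K) i) := by
  refine le_antisymm (fun z ⟨y, hy⟩ ↦ ?_)
    (sup_le (range_barB_le_boundaryPreimage ψ i) (ker_barMap_le_boundaryPreimage ψ i))
  obtain ⟨x, rfl⟩ := LinearMap.lTensor_surjective M
    (barDMap_surjective (φ := ψ.restrictScalars K) hψ (i + 1)) y
  refine Submodule.mem_sup.2 ⟨_, ⟨x, rfl⟩, z - barB K n N M i x, ?_, add_sub_cancel _ _⟩
  rw [LinearMap.mem_ker, map_sub, ← barB_barMap, hy, sub_self]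

theorem boundaryPreimage_le_polynomialLimit (hφ₀ : Function.Surjective φ₀)
    (hlim : LinearMap.ker (φ₀.restrictScalars K) ≤
      polynomialLimit fun l ↦ LinearMap.ker ((φ l).restrictScalars K)) (i : ℕ) :
    boundaryPreimage M φ₀ i ≤ polynomialLimit fun l ↦ boundaryPreimage M (φ l) i := by
  rw [boundaryPreimage_eq_sup hφ₀]
  refine sup_le ?_ ?_
  · exact (le_polynomialLimit_const _).trans <|
      polynomialLimit_mono fun l ↦ range_barB_le_boundaryPreimage (φ l) i
  · exact (ker_lTensor_le_polynomialLimit (barDMap_surjective hφ₀ i)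
      (ker_barDMap_le_polynomialLimit hφ₀ hlim i)).trans <|
        polynomialLimit_mono fun l ↦ ker_barMap_le_boundaryPreimage (φ l) i

variable {GM : ℤ → Submodule K M} {GN : ℤ → Submodule K N}
  {GN' : ∀ l, ℤ → Submodule K (N' l)}

theorem generallyScalar_finrank_boundaryPreimage_le [SetLike.GradedSMul (polyGrade K n) GM]
    [∀ l, SetLike.GradedSMul (polyGrade K n) (GN' l)] (hM : DirectSum.IsInternal GM)
    (hN : DirectSum.IsInternal GN) (hN' : ∀ l, DirectSum.IsInternal (GN' l))
    (hφ₀ : Function.Surjective φ₀)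
    (hφ : ∀ l, PreservesGrading GN (GN' l) ((φ l).restrictScalars K))
    (hlim : LinearMap.ker (φ₀.restrictScalars K) ≤
      polynomialLimit fun l ↦ LinearMap.ker ((φ l).restrictScalars K)) (i : ℕ) (d : ℤ)
    [Module.Finite K (barGrade (n := n) GM GN i d)] :
    generallyScalar K fun l ↦
      Module.finrank K ↥(boundaryPreimage M φ₀ i ⊓ barGrade GM GN i d) ≤
        Module.finrank K ↥(boundaryPreimage M (φ l) i ⊓ barGrade GM GN i d) := by
  have hfinite (Z : Submodule K (M ⊗[K] barD K n N i)) :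
      Module.Finite K ↥(Z ⊓ barGrade GM GN i d) := Submodule.finiteDimensional_inf_right _ _
  exact generallyScalar_finrank_le <|
    inf_le_polynomialLimit_inf (isInternal_barGrade hM hN i)
      (boundaryPreimage_le_polynomialLimit hφ₀ hlim i)
      (fun l d _ hv ↦ gradedProj_mem_boundaryPreimage hM hN (hN' l) (hφ l) i d hv) d

end BoundaryPreimageLimit

section QuotientTor

variable {K : Type} [Field K] {n : ℕ} {M : Type} [AddCommGroup M] [Module K M]
  [Module (PS K n) M] [IsScalarTower K (PS K n) M] {GM : ℤ → Submodule K M} {a : ℤ}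

theorem torStrandDim_eq_zero_of_lt [SetLike.GradedSMul (polyGrade K n) GM]
    (hM : DirectSum.IsInternal GM) (ha : ∀ d < a, GM d = ⊥) (hMfg : ∀ d, (GM d).FG)
    {I : Ideal (PS K n)} (hI : IsHomog K n I) {i : ℕ} {d : ℤ} (hd : d < a + i + 1) :
    torStrandDim K n (PS K n ⧸ I) M GM (quotGrade K n I) (i + 1) d = 0 := by
  have := finite_barGrade (n := n) ha hMfg (fun _ ↦ quotGrade_eq_bot I) (fg_quotGrade I) (i + 1) d
  have := Submodule.finiteDimensional_inf_right
    (LinearMap.range (barB K n (PS K n ⧸ I) M (i + 1))) (barGrade GM (quotGrade K n I) (i + 1) d)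
  refine Nat.sub_eq_zero_of_le <| Submodule.finrank_mono fun z ⟨hz, hzd⟩ ↦ ⟨?_, hzd⟩
  exact mem_range_barB_of_lt (isInternal_quotGrade hI) (fun _ ↦ quotGrade_eq_bot I) i hM ha hd
    hzd hz

theorem generallyScalar_torStrandDim_quotient_le [SetLike.GradedSMul (polyGrade K n) GM]
    (hM : DirectSum.IsInternal GM) (ha : ∀ d < a, GM d = ⊥) (hMfg : ∀ d, (GM d).FG)
    {I₀ : Ideal (PS K n)} {I : Kˣ → Ideal (PS K n)} (hI₀ : IsHomog K n I₀)
    (hI : ∀ l, IsHomog K n (I l))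
    (hlim : I₀.restrictScalars K ≤ polynomialLimit fun l ↦ (I l).restrictScalars K)
    (hθ : ∀ l, ∃ θ : (PS K n ⧸ I₀) →ₗ[K] (PS K n ⧸ I l),
      Function.Injective θ ∧ PreservesGrading (quotGrade K n I₀) (quotGrade K n (I l)) θ)
    (i : ℕ) (d : ℤ) :
    generallyScalar K fun l ↦ torStrandDim K n (PS K n ⧸ I l) M GM (quotGrade K n (I l)) i d ≤
      torStrandDim K n (PS K n ⧸ I₀) M GM (quotGrade K n I₀) i d := by
  have hfinite (k : ℕ) :=
    finite_barGrade (n := n) ha hMfg (fun _ ↦ polyGrade_eq_bot) (fg_polyGrade (n := n)) k d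
  have hgr (L : Ideal (PS K n)) :
      PreservesGrading (polyGrade K n) (quotGrade K n L) (L.mkQ.restrictScalars K) :=
    fun _ _ hf ↦ Submodule.mem_map_of_mem hf
  have hZ (k : ℕ) := generallyScalar_finrank_boundaryPreimage_le (M := M) (φ₀ := I₀.mkQ)
    (φ := fun l ↦ (I l).mkQ) hM isInternal_polyGrade (fun l ↦ isInternal_quotGrade (hI l))
    I₀.mkQ_surjective (fun l ↦ hgr (I l))
    (by simpa only [LinearMap.ker_restrictScalars, Submodule.ker_mkQ] using hlim) k d
  match i with
  | 0 =>
    have htor {L : Ideal (PS K n)} (hL : IsHomog K n L) := torStrandDim_zero_add hM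
      isInternal_polyGrade (isInternal_quotGrade hL) L.mkQ_surjective (hgr L) d
    refine (hZ 0).mono fun l hl ↦ ?_
    have h₀ := htor hI₀
    have h := htor (hI l)
    lia
  | i + 1 =>
    have htor {L : Ideal (PS K n)} (hL : IsHomog K n L) := torStrandDim_succ_add hM
      isInternal_polyGrade (isInternal_quotGrade hL) L.mkQ_surjective (hgr L) i d
    refine ((hZ i).and (hZ (i + 1))).mono fun l hl ↦ ?_
    obtain ⟨θ, hθinj, hθgr⟩ := hθ l
    have := finite_barGrade (n := n) ha hMfg (fun _ ↦ quotGrade_eq_bot (I l)) (fg_quotGrade _) i d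
    have hterm := finrank_barGrade_le_of_injective (n := n) (GM := GM) hθinj hθgr i d
    have h₀ := htor hI₀
    have h := htor (hI l)
    lia

end QuotientTor

section MainTheorem

variable {K : Type} [Field K] {n : ℕ}

theorem tor_dim_initial_weight_ge_general (j : ℤ) (w : Fin n → ℕ) {M : Type} [AddCommGroup M]
    [Module K M] [Module (PS K n) M] [IsScalarTower K (PS K n) M] {GM : ℤ → Submodule K M}
    [SetLike.GradedSMul (polyGrade K n) GM] (hM : DirectSum.IsInternal GM) {a : ℤ}
    (ha : ∀ d < a, GM d = ⊥) (hMfg : ∀ d, (GM d).FG) {J : Ideal (PS K n)} (hJ : IsHomog K n J) :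
    generallyScalar K fun l ↦ ∀ i : ℕ,
      torStrandDim K n (PS K n ⧸ J.map (diagCoord K n w l)) M GM
          (quotGrade K n (J.map (diagCoord K n w l))) i j ≤
        torStrandDim K n (PS K n ⧸ initialIdealW K n w J) M GM
          (quotGrade K n (initialIdealW K n w J)) i j := by
  have hpointwise (i : ℕ) := generallyScalar_torStrandDim_quotient_le hM ha hMfg
    (isHomog_initialIdealW (w := w) hJ) (isHomog_map_diagCoord hJ) initialIdealW_le_polynomialLimit
    (exists_injective_initialIdealW_map_diagCoord hJ) i j
  refine (generallyScalar_forall_lt hpointwise ((j - a).toNat + 1)).mono fun l hl i ↦ ?_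
  rcases lt_or_ge i ((j - a).toNat + 1) with hi | hi
  · exact hl i hi
  · obtain ⟨k, rfl⟩ := Nat.exists_eq_add_of_le' (le_of_add_le_right hi)
    rw [torStrandDim_eq_zero_of_lt hM ha hMfg (isHomog_map_diagCoord hJ l) (by lia)]
    exact Nat.zero_le _

end MainTheorem

/-- **Lemma 2.4** (Caviglia–Murai): fix `j ∈ ℤ`, a weight `w ∈ ℤ_{≥0}^n`, a finitely
generated graded `S`-module `M` and a homogeneous ideal `J ⊆ S`.  For a general `λ ∈ K`,
`dim_K Tor_i(M, S/in_w(J))_j ≥ dim_K Tor_i(M, S/D_{λ,w}(J))_j` for all `i`. -/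
theorem tor_dim_initial_weight_ge [Infinite K] (j : ℤ) (w : Fin n → ℕ)
    (Mod : Type) [AddCommGroup Mod] [Module K Mod] [Module (PS K n) Mod]
    [IsScalarTower K (PS K n) Mod]
    (GMod : ℤ → Submodule K Mod) [DirectSum.Decomposition GMod]
    (hGMod : ∀ (a : ℕ) (b : ℤ) (s : PS K n) (x : Mod),
      s ∈ homogeneousSubmodule (Fin n) K a → x ∈ GMod b → s • x ∈ GMod ((a : ℤ) + b))
    (hModfg : Module.Finite (PS K n) Mod)
    (J : Ideal (PS K n)) (hJ : IsHomog K n J) :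
    generallyScalar K (fun l => ∀ i : ℕ,
      torStrandDim K n (PS K n ⧸ Ideal.map (diagCoord K n w l) J) Mod
          GMod (quotGrade K n (Ideal.map (diagCoord K n w l) J)) i j ≤
        torStrandDim K n (PS K n ⧸ initialIdealW K n w J) Mod
          GMod (quotGrade K n (initialIdealW K n w J)) i j) := by
  have := gradedSMul_of_forall_natCast hGMod
  have hMod := DirectSum.Decomposition.isInternal GMod
  obtain ⟨a, ha, hfg⟩ := exists_grade_eq_bot_and_fg (n := n) hMod
  exact tor_dim_initial_weight_ge_general j w hMod ha hfg hJ

end
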